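/- arXiv:1211.3171 — 2 statements merged into one kernel-verified Lean document; each statement's English description precedes it below -/
import Mathlib

section
/- Let (X,d) be a proper metric space and μ a Borel measure on X with 0 < μ(U) < ∞ for every nonempty bounded open set U ⊆ X. Let x₀ ∈ X, C ≥ K_a, C₀ ≥ 1, and assume that (CKN)_C^{x₀}, (VD)^n_{C₀} and (AR)^n_{x₀} all hold. Then (X,d,μ) has exactly n-dimensional volume growth at x₀: for all ρ > 0, C₀^{-1}·(K_a/C)^{n/(1-a)}·ω_n·ρ^n ≤ μ(B(x₀,ρ)) ≤ C₀·ω_n·ρ^n. -/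
/-!
The upper bound follows from doubling, started at small radii whose volume ratio is close to `1`.

For the lower bound put `s = 2 - ap` and `N = n / (1 - a)`, so that `p = 2N / (N - 2)` and
`n = sN/2 + 2 - s`. Write `d` for the distance to `x₀`. The extremal functions of the sharp inequality
in `ℝ^n` are `(l + |x| ^ s) ^ (-(N - 2)/2)`; inserting the same functions of `d` in `(CKN)` (after
truncation, `ckn_radial`) gives, with `J l = ∫ (l + d ^ s) ^ (-(N - 1)) d ^ (-ap) dμ` and
`I l = ∫ (l + d ^ s) ^ (-N) d ^ (-ap) dμ = - J' l / (N - 1)`, the differential inequality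
`I ^ ((N - 2)/N) ≤ C² (n - 2)² (J - l I)`.

For the Euclidean model `J₀ l = B l ^ (1 - N/2)`, with `B` an explicit quotient of Gamma values
(`model_integral`), and equality holds with `C = K_a`. Hence `t J₀` is a barrier for every
`t ≤ (K_a / C) ^ N` (`sharp_const_compare`, `ode_compare`). The density condition at `x₀` gives
`J ≥ t J₀` for small `l` if `t < 1`, so `J ≥ t J₀` for all `l`. If the lower bound failed at some `ρ`,
doubling would give `μ (B(x₀, r)) ≤ b ω_n r ^ n` for all `r > ρ` with some `b < (K_a / C) ^ N`, hence
`J ≤ b J₀ + o(J₀)` as `l → ∞`, which is a contradiction for `b < t` (`one_dim_growth`). Both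
comparisons of `J` with `J₀` use only the measures of balls, through the layer-cake formula
(`lintegral_antitone_compare`).
-/

open MeasureTheory Filter Topology Metric

/-- Volume of the unit ball in `ℝ^n`. -/
noncomputable def omegaBall (n : ℕ) : ℝ :=
  Real.pi ^ ((n : ℝ) / 2) / Real.Gamma ((n : ℝ) / 2 + 1)

/-- The sharp Caffarelli-Kohn-Nirenberg constant `K_a` (for `p = 2n/(n-2+2a)`). -/
noncomputable def CKNconst (n : ℕ) (a p : ℝ) : ℝ :=
  (1 / (((n : ℝ) - 2) * ((n : ℝ) - a * p))) ^ ((1 : ℝ) / 2) *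
    ((2 - a * p) * Real.Gamma ((2 * (n : ℝ) - 2 * a * p) / (2 - a * p)) /
        ((n : ℝ) * omegaBall n * Real.Gamma (((n : ℝ) - a * p) / (2 - a * p)) ^ 2)) ^
      ((2 - a * p) / (2 * (n : ℝ) - 2 * a * p))

/-- The local Lipschitz constant `|Du|(x) = limsup_{y → x} |u(y)-u(x)| / d(x,y)`. -/
noncomputable def locLip {X : Type*} [MetricSpace X] (u : X → ℝ) (x : X) : ℝ :=
  Filter.limsup (fun y => |u y - u x| / dist x y) (𝓝[≠] x)

/-- The Caffarelli-Kohn-Nirenberg inequality `(CKN)_C^{x₀}` on a metric measure space: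
`(∫_X |u|^p / d(x₀,·)^{ap} dμ)^{1/p} ≤ C (∫_X |Du|² dμ)^{1/2}` for all Lipschitz functions
with compact support. -/
def CKNineq {X : Type*} [MetricSpace X] [MeasurableSpace X]
    (μ : Measure X) (x₀ : X) (a p C : ℝ) : Prop :=
  ∀ u : X → ℝ, (∃ K : NNReal, LipschitzWith K u) → HasCompactSupport u →
    (∫⁻ x, ENNReal.ofReal (|u x| ^ p / dist x₀ x ^ (a * p)) ∂μ) ^ ((1 : ℝ) / p) ≤
      ENNReal.ofReal C * (∫⁻ x, ENNReal.ofReal (locLip u x ^ 2) ∂μ) ^ ((1 : ℝ) / 2)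

/-- The volume condition `(VD)^m_{C₀}`: `μ(B(x,R))/μ(B(x,r)) ≤ C₀ (R/r)^m`
for all `x` and `0 < r < R`. -/
def VDcond {X : Type*} [MetricSpace X] [MeasurableSpace X]
    (μ : Measure X) (m C₀ : ℝ) : Prop :=
  ∀ x : X, ∀ r R : ℝ, 0 < r → r < R →
    μ (ball x R) ≤ ENNReal.ofReal (C₀ * (R / r) ^ m) * μ (ball x r)

/-- The density condition `(AR)^n_{x₀}`: `liminf_{r → 0} μ(B(x₀,r))/(ω_n r^n) = 1`. -/
def ARcond {X : Type*} [MetricSpace X] [MeasurableSpace X]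
    (μ : Measure X) (x₀ : X) (n : ℕ) : Prop :=
  Filter.liminf (fun r : ℝ => (μ (ball x₀ r)).toReal / (omegaBall n * r ^ n)) (𝓝[>] 0) = 1

/-! ### Comparison of measures on the half-line -/

/-- Layer-cake comparison: domination on all intervals `(0, r)` passes to integrals of nonincreasing
functions, whose superlevel sets in `(0, ∞)` are such intervals. No domination `m₁ ≤ m₂` of measures
is assumed. -/
theorem lintegral_antitone_compare (m₁ m₂ : Measure ℝ)
    (h : ∀ r, 0 < r → m₁ (Set.Ioo 0 r) ≤ m₂ (Set.Ioo 0 r))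
    (f : ℝ → ℝ) (hf : AntitoneOn f (Set.Ioi 0)) (hfc : ContinuousOn f (Set.Ioi 0))
    (hf0 : ∀ x, 0 < x → 0 ≤ f x) :
    ∫⁻ x in Set.Ioi 0, ENNReal.ofReal (f x) ∂m₁ ≤ ∫⁻ x in Set.Ioi 0, ENNReal.ofReal (f x) ∂m₂ := by
  have key : ∀ m : Measure ℝ, ∫⁻ x in Set.Ioi 0, ENNReal.ofReal (f x) ∂m
      = ∫⁻ t in Set.Ioi 0, m ({x | t < f x} ∩ Set.Ioi 0) := by
    intro m
    rw [lintegral_eq_lintegral_meas_lt]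
    · refine lintegral_congr fun t => ?_
      rw [Measure.restrict_apply' measurableSet_Ioi]
    · filter_upwards [ae_restrict_mem measurableSet_Ioi] with x hx using hf0 x hx
    · exact hfc.aemeasurable measurableSet_Ioi
  rw [key, key]
  refine lintegral_mono fun t => ?_
  set S := {x | t < f x} ∩ Set.Ioi 0 with hS
  have hlow : ∀ x ∈ S, ∀ y, 0 < y → y ≤ x → y ∈ S := fun x hx y hy hyx =>
    ⟨lt_of_lt_of_le hx.1 (hf hy hx.2 hyx), hy⟩
  have hopen : IsOpen S := by
    have := hfc.isOpen_inter_preimage isOpen_Ioi (isOpen_Ioi (a := t))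
    rwa [Set.inter_comm] at this
  by_cases hb : BddAbove S
  · by_cases hne : S.Nonempty
    · have hSeq : S = Set.Ioo 0 (sSup S) := by
        ext x
        constructor
        · intro hx
          refine ⟨hx.2, ?_⟩
          obtain ⟨l, u, hlu, hsub⟩ := mem_nhds_iff_exists_Ioo_subset.1 (hopen.mem_nhds hx)
          obtain ⟨y, hy⟩ := exists_between hlu.2
          exact lt_of_lt_of_le hy.1 (le_csSup hb (hsub ⟨hlu.1.trans hy.1, hy.2⟩))
        · rintro ⟨hx0, hx⟩
          obtain ⟨y, hy, hxy⟩ := exists_lt_of_lt_csSup hne hx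
          exact hlow y hy x hx0 hxy.le
      have hpos : 0 < sSup S := by
        obtain ⟨x, hx⟩ := hne
        rw [hSeq] at hx
        exact hx.1.trans hx.2
      rw [hSeq]
      exact h _ hpos
    · rw [Set.not_nonempty_iff_eq_empty.1 hne]; simp
  · have hSeq : S = ⋃ k : ℕ, Set.Ioo 0 ((k : ℝ) + 1) := by
      ext x
      simp only [Set.mem_iUnion]
      constructor
      · intro hx
        obtain ⟨k, hk⟩ := exists_nat_gt x
        exact ⟨k, hx.2, by linarith⟩
      · rintro ⟨k, hx0, hx⟩
        obtain ⟨y, hy, hxy⟩ := not_bddAbove_iff.1 hb x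
        exact hlow y hy x hx0 hxy.le
    have hmono : Monotone fun k : ℕ => Set.Ioo (0:ℝ) ((k : ℝ) + 1) := by
      intro i j hij
      apply Set.Ioo_subset_Ioo_right
      have : (i:ℝ) ≤ j := by exact_mod_cast hij
      linarith
    rw [hSeq, hmono.measure_iUnion, hmono.measure_iUnion]
    exact iSup_mono fun k => h _ (by positivity)

/-! ### The differential inequality -/

/-- `M l ^ (1 - N/2)` is a barrier from below: with `P = M (N/2 - 1)/(N - 1)`, the hypothesis `hsub`
says that it satisfies the differential inequality of `J` in the reverse direction. To the right of
the last point where `J` is not below the barrier, `J` would decrease more slowly than the barrier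
does, so `J` cannot fall below it. -/
theorem ode_compare (N c M P : ℝ) (hN : 2 < N) (hc : 0 < c) (hP : 0 < P)
    (hMP : P * (N - 1) = M * (N / 2 - 1))
    (hsub : c * (M - P) ≤ P ^ ((N - 2) / N))
    (J I : ℝ → ℝ) (hJ : ∀ l, 0 < l → HasDerivAt J (-((N - 1) * I l)) l)
    (hineq : ∀ l, 0 < l → (I l) ^ ((N - 2) / N) ≤ c * (J l - l * I l))
    (hsmall : ∀ δ, 0 < δ → ∃ l, 0 < l ∧ l < δ ∧ M * l ^ (1 - N / 2) ≤ J l) :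
    ∀ l, 0 < l → M * l ^ (1 - N / 2) ≤ J l := by
  intro l₁ hl₁
  by_contra hcon
  push Not at hcon
  set G : ℝ → ℝ := fun l => J l - M * l ^ (1 - N / 2) with hG
  have hGd : ∀ l, 0 < l → HasDerivAt G ((N - 1) * (P * l ^ (-(N / 2)) - I l)) l := by
    intro l hl
    have h1 := (Real.hasDerivAt_rpow_const (x := l) (p := 1 - N / 2) (Or.inl hl.ne')).const_mul M
    have h2 := (hJ l hl).sub h1
    refine h2.congr_deriv ?_
    have : (1 - N / 2 - 1 : ℝ) = -(N / 2) := by ring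
    rw [this]
    linear_combination (-l ^ (-(N / 2))) * hMP
  obtain ⟨l₂, hl₂, hl₂₁, hGl₂⟩ := hsmall l₁ hl₁
  have hGc : ContinuousOn G (Set.Icc l₂ l₁) := fun l hl =>
    (hGd l (hl₂.trans_le hl.1)).continuousAt.continuousWithinAt
  set S := Set.Icc l₂ l₁ ∩ G ⁻¹' Set.Ici 0 with hS
  have hScl : IsClosed S := hGc.preimage_isClosed_of_isClosed isClosed_Icc isClosed_Ici
  have hSne : S.Nonempty := ⟨l₂, ⟨le_rfl, hl₂₁.le⟩, by simp [hG]; linarith⟩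
  have hSb : BddAbove S := ⟨l₁, fun x hx => hx.1.2⟩
  have hmem := hScl.csSup_mem hSne hSb
  set l₀ := sSup S with hl₀
  have hl₀pos : 0 < l₀ := hl₂.trans_le hmem.1.1
  have hmono : MonotoneOn G (Set.Icc l₀ l₁) := by
    refine monotoneOn_of_deriv_nonneg (convex_Icc _ _)
      (fun l hl => (hGd l (hl₀pos.trans_le hl.1)).continuousAt.continuousWithinAt) ?_ ?_
    · rw [interior_Icc]
      exact fun l hl => (hGd l (hl₀pos.trans hl.1)).differentiableAt.differentiableWithinAt
    · rw [interior_Icc]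
      intro l hl
      have hlpos := hl₀pos.trans hl.1
      rw [(hGd l hlpos).deriv]
      have hneg : G l < 0 := by
        by_contra hge
        push Not at hge
        have : l ∈ S := ⟨⟨hmem.1.1.trans hl.1.le, hl.2.le⟩, hge⟩
        exact absurd (le_csSup hSb this) (not_le.2 hl.1)
      refine mul_nonneg (by linarith) ?_
      by_contra hI
      push Not at hI
      have hlp : 0 < l ^ (-(N / 2)) := Real.rpow_pos_of_pos hlpos _
      have hκ : 0 < (N - 2) / N := div_pos (by linarith) (by linarith)
      have h1 : (P * l ^ (-(N / 2))) ^ ((N - 2) / N) < I l ^ ((N - 2) / N) :=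
        Real.rpow_lt_rpow (by positivity) (by linarith) hκ
      rw [Real.mul_rpow hP.le hlp.le, ← Real.rpow_mul hlpos.le] at h1
      have he : -(N / 2) * ((N - 2) / N) = 1 - N / 2 := by
        field_simp; ring
      rw [he] at h1
      have hl1 : l * l ^ (-(N / 2)) = l ^ (1 - N / 2) := by
        rw [sub_eq_add_neg, Real.rpow_add hlpos, Real.rpow_one]
      have hQ : 0 < l ^ (1 - N / 2) := Real.rpow_pos_of_pos hlpos _
      have h2 := hineq l hlpos
      have h3 : J l - l * I l < (M - P) * l ^ (1 - N / 2) := by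
        have : l * (P * l ^ (-(N / 2))) < l * I l := mul_lt_mul_of_pos_left (by linarith) hlpos
        have h4 : J l < M * l ^ (1 - N / 2) := by simp only [hG] at hneg; linarith
        nlinarith
      have h5 := mul_lt_mul_of_pos_left h3 hc
      have h6 := mul_le_mul_of_nonneg_right hsub hQ.le
      nlinarith
  have h7 := hmono ⟨le_rfl, hmem.1.2⟩ ⟨hmem.1.2, le_rfl⟩ hmem.1.2
  have h8 : 0 ≤ G l₀ := hmem.2
  simp only [hG] at h7 h8
  linarith

/-! ### The radial Euclidean model -/

theorem lintegral_gamma_kernel (e b : ℝ) (s : ℝ) (hs : 0 < s) (he : 0 < e) (hb : 0 < b) :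
    ∫⁻ x in Set.Ioi (0:ℝ), ENNReal.ofReal (x ^ (s * e - 1) * Real.exp (-b * x ^ s))
      = ENNReal.ofReal (b ^ (-e) * (1 / s) * Real.Gamma e) := by
  have hq : -1 < s * e - 1 := by have := mul_pos hs he; linarith
  have h := integral_rpow_mul_exp_neg_mul_rpow hs hq hb
  have he' : (s * e - 1 + 1) / s = e := by field_simp; ring
  have he2 : -(s * e - 1 + 1) / s = -e := by field_simp; ring
  rw [he', he2] at h
  rw [← h, ofReal_integral_eq_lintegral_ofReal]
  · exact integrableOn_rpow_mul_exp_neg_mul_rpow hq hs hb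
  · filter_upwards [ae_restrict_mem measurableSet_Ioi] with x hx
    have : (0:ℝ) < x := hx
    positivity

/-- A Beta integral on the half-line, obtained by writing `(l + r ^ s) ^ (-(N - 1))` as a Laplace
integral and exchanging the order of integration. -/
theorem lintegral_model (N s l : ℝ) (hN : 2 < N) (hs : 0 < s) (hl : 0 < l) :
    ∫⁻ r in Set.Ioi (0:ℝ), ENNReal.ofReal ((l + r ^ s) ^ (-(N - 1)) * r ^ (s * (N / 2) - 1))
      = ENNReal.ofReal (Real.Gamma (N / 2) * Real.Gamma (N / 2 - 1) / (s * Real.Gamma (N - 1))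
          * l ^ (1 - N / 2)) := by
  have hΓ : 0 < Real.Gamma (N - 1) := Real.Gamma_pos_of_pos (by linarith)
  have hΓ2 : 0 < Real.Gamma (N / 2) := Real.Gamma_pos_of_pos (by linarith)
  have hx : ∀ b, 0 < b → ∀ e, 0 < e → ∫⁻ x in Set.Ioi (0:ℝ),
      ENNReal.ofReal (x ^ (e - 1) * Real.exp (-b * x))
        = ENNReal.ofReal (b ^ (-e) * Real.Gamma e) := by
    intro b hb e he
    have := lintegral_gamma_kernel e b 1 one_pos he hb
    simpa using this
  have h1 : ∀ r ∈ Set.Ioi (0:ℝ),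
      ENNReal.ofReal ((l + r ^ s) ^ (-(N - 1)) * r ^ (s * (N / 2) - 1))
      = ENNReal.ofReal (1 / Real.Gamma (N - 1)) * ∫⁻ x in Set.Ioi (0:ℝ), ENNReal.ofReal
        (x ^ (N - 1 - 1) * Real.exp (-l * x) * (r ^ (s * (N / 2) - 1) * Real.exp (-x * r ^ s))) := by
    intro r hr
    have hr0 : (0:ℝ) < r := hr
    have hrs : 0 < r ^ s := Real.rpow_pos_of_pos hr0 _
    have h2 : ∀ x : ℝ, x ∈ Set.Ioi (0:ℝ) → ENNReal.ofReal
        (x ^ (N - 1 - 1) * Real.exp (-l * x) * (r ^ (s * (N / 2) - 1) * Real.exp (-x * r ^ s)))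
        = ENNReal.ofReal (r ^ (s * (N / 2) - 1)) *
          ENNReal.ofReal (x ^ (N - 1 - 1) * Real.exp (-(l + r ^ s) * x)) := by
      intro x hx
      rw [← ENNReal.ofReal_mul (by positivity)]
      congr 1
      have : -(l + r ^ s) * x = -l * x + -x * r ^ s := by ring
      rw [this, Real.exp_add]; ring
    rw [setLIntegral_congr_fun measurableSet_Ioi h2, lintegral_const_mul' _ _ ENNReal.ofReal_ne_top,
      hx _ (by positivity) _ (by linarith), ← ENNReal.ofReal_mul (by positivity),
      ← ENNReal.ofReal_mul (by positivity)]
    congr 1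
    field_simp
  rw [setLIntegral_congr_fun measurableSet_Ioi h1, lintegral_const_mul' _ _ ENNReal.ofReal_ne_top,
    lintegral_lintegral_swap (by
      apply Measurable.aemeasurable
      unfold Function.uncurry
      fun_prop)]
  have h3 : ∀ x : ℝ, x ∈ Set.Ioi (0:ℝ) → ∫⁻ r in Set.Ioi (0:ℝ), ENNReal.ofReal
        (x ^ (N - 1 - 1) * Real.exp (-l * x) * (r ^ (s * (N / 2) - 1) * Real.exp (-x * r ^ s)))
        = ENNReal.ofReal (1 / s * Real.Gamma (N / 2)) *
          ENNReal.ofReal (x ^ (N / 2 - 1 - 1) * Real.exp (-l * x)) := by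
    intro x hx
    have hx0 : (0:ℝ) < x := hx
    simp_rw [ENNReal.ofReal_mul (show 0 ≤ x ^ (N - 1 - 1) * Real.exp (-l * x) by positivity)]
    rw [lintegral_const_mul' _ _ ENNReal.ofReal_ne_top, lintegral_gamma_kernel _ _ _ hs (by linarith) hx0,
      ← ENNReal.ofReal_mul (by positivity), ← ENNReal.ofReal_mul (by positivity)]
    congr 1
    have : N / 2 - 1 - 1 = (N - 1 - 1) + -(N / 2) := by ring
    rw [this, Real.rpow_add hx0]; ring
  rw [setLIntegral_congr_fun measurableSet_Ioi h3, lintegral_const_mul' _ _ ENNReal.ofReal_ne_top,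
    hx _ hl _ (by linarith), ← ENNReal.ofReal_mul (by positivity), ← ENNReal.ofReal_mul (by positivity)]
  congr 1
  have : -(N / 2 - 1) = 1 - N / 2 := by ring
  rw [this]
  field_simp

/-- The measure `e ω r ^ (e - 1) dr` on `(0, ∞)`. For `e = n` and `ω` the volume of the unit ball it
is the image of Lebesgue measure on `ℝ^n` under the norm. -/
noncomputable def radialModel (e ω : ℝ) : Measure ℝ :=
  (volume.restrict (Set.Ioi 0)).withDensity fun r => ENNReal.ofReal (e * ω * r ^ (e - 1))

/-- The weighted kernel `(l + r ^ s) ^ (-β) r ^ (s - 2)`. Here `s = 2 - ap`, so the second factor is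
the weight `r ^ (-ap)`. -/
noncomputable def cknKernel (s β l r : ℝ) : ℝ := (l + r ^ s) ^ (-β) * r ^ (s - 2)

theorem setLIntegral_radialModel (e ω : ℝ) (he : 0 < e) (hω : 0 < ω) (f : ℝ → ℝ)
    (S : Set ℝ) (hS : MeasurableSet S) (hS0 : S ⊆ Set.Ioi 0) :
    ∫⁻ r in S, ENNReal.ofReal (f r) ∂(radialModel e ω)
      = ∫⁻ r in S, ENNReal.ofReal (e * ω * (f r * r ^ (e - 1))) := by
  unfold radialModel
  rw [restrict_withDensity hS, lintegral_withDensity_eq_lintegral_mul_non_measurable,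
    Measure.restrict_restrict hS, Set.inter_eq_self_of_subset_left hS0]
  · refine setLIntegral_congr_fun hS fun r hr => ?_
    have : (0:ℝ) < r := hS0 hr
    simp only [Pi.mul_apply]
    rw [← ENNReal.ofReal_mul (by positivity)]
    congr 1; ring
  · fun_prop
  · exact Eventually.of_forall fun x => ENNReal.ofReal_lt_top

theorem radialModel_Ioo (e ω r : ℝ) (he : 0 < e) (hω : 0 < ω) (hr : 0 < r) :
    radialModel e ω (Set.Ioo 0 r) = ENNReal.ofReal (ω * r ^ e) := by
  have h := setLIntegral_radialModel e ω he hω (fun _ => 1) (Set.Ioo 0 r) measurableSet_Ioo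
    (fun x hx => hx.1)
  simp only [ENNReal.ofReal_one, lintegral_const, one_mul, Measure.restrict_apply_univ] at h
  rw [h]
  have hinteg : IntervalIntegrable (fun x : ℝ => e * ω * x ^ (e - 1)) volume 0 r :=
    (intervalIntegral.intervalIntegrable_rpow' (by linarith)).const_mul _
  rw [← ofReal_integral_eq_lintegral_ofReal]
  · rw [← integral_Ioc_eq_integral_Ioo, ← intervalIntegral.integral_of_le hr.le,
      intervalIntegral.integral_const_mul, integral_rpow (Or.inl (by linarith))]
    congr 1
    rw [sub_add_cancel, Real.zero_rpow he.ne']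
    field_simp; ring
  · exact ((intervalIntegrable_iff_integrableOn_Ioo_of_le hr.le).1 hinteg)
  · filter_upwards [ae_restrict_mem measurableSet_Ioo] with x hx
    have : (0:ℝ) < x := hx.1
    positivity

theorem cknKernel_nonneg (s β l r : ℝ) (hl : 0 < l) (hr : 0 ≤ r) : 0 ≤ cknKernel s β l r := by
  unfold cknKernel
  positivity

theorem cknKernel_continuousOn (s β l : ℝ) (hl : 0 < l) :
    ContinuousOn (cknKernel s β l) (Set.Ioi 0) := by
  intro r hr
  have hr0 : (0:ℝ) < r := hr
  have h1 : 0 < r ^ s := Real.rpow_pos_of_pos hr0 _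
  apply ContinuousAt.continuousWithinAt
  unfold cknKernel
  have hc : ContinuousAt (fun x : ℝ => x ^ s) r := Real.continuousAt_rpow_const _ _ (Or.inl hr0.ne')
  have hne : l + r ^ s ≠ 0 := by positivity
  exact ((continuousAt_const.add hc).rpow_const (Or.inl hne)).mul
    (Real.continuousAt_rpow_const _ _ (Or.inl hr0.ne'))

theorem cknKernel_antitoneOn (s β l : ℝ) (hs : 0 < s) (hs2 : s ≤ 2) (hβ : 0 ≤ β) (hl : 0 < l) :
    AntitoneOn (cknKernel s β l) (Set.Ioi 0) := by
  intro x hx y hy hxy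
  have hx0 : (0:ℝ) < x := hx
  have hy0 : (0:ℝ) < y := hy
  have h1 : 0 < x ^ s := Real.rpow_pos_of_pos hx0 _
  have h2 : x ^ s ≤ y ^ s := Real.rpow_le_rpow hx0.le hxy hs.le
  unfold cknKernel
  refine mul_le_mul (Real.rpow_le_rpow_of_nonpos (by positivity) (by linarith) (by linarith))
    (Real.rpow_le_rpow_of_nonpos hx0 hxy (by linarith)) (by positivity) (by positivity)

/-- The coefficient of `l ^ (1 - N/2)` in the integral of `cknKernel s (N - 1) l` against the model
measure of dimension `s N/2 + 2 - s`. -/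
noncomputable def modelCoeff (s N ω : ℝ) : ℝ :=
  (s * (N / 2) + 2 - s) * ω *
    (Real.Gamma (N / 2) * Real.Gamma (N / 2 - 1) / (s * Real.Gamma (N - 1)))

theorem cknKernel_mul_density (s N l r : ℝ) (hr : 0 < r) :
    cknKernel s (N - 1) l r * r ^ (s * (N / 2) + 2 - s - 1)
      = (l + r ^ s) ^ (-(N - 1)) * r ^ (s * (N / 2) - 1) := by
  unfold cknKernel
  rw [mul_assoc, ← Real.rpow_add hr]
  congr 2; ring

theorem model_integral (s N ω l : ℝ) (hs : 0 < s) (hN : 2 < N) (hω : 0 < ω) (hl : 0 < l) :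
    ∫⁻ r in Set.Ioi 0, ENNReal.ofReal (cknKernel s (N - 1) l r)
      ∂(radialModel (s * (N / 2) + 2 - s) ω)
      = ENNReal.ofReal (modelCoeff s N ω * l ^ (1 - N / 2)) := by
  have he : 0 < s * (N / 2) + 2 - s := by nlinarith
  rw [setLIntegral_radialModel _ _ he hω _ _ measurableSet_Ioi subset_rfl]
  have h : ∀ r ∈ Set.Ioi (0:ℝ), ENNReal.ofReal ((s * (N / 2) + 2 - s) * ω *
      (cknKernel s (N - 1) l r * r ^ (s * (N / 2) + 2 - s - 1)))
      = ENNReal.ofReal ((s * (N / 2) + 2 - s) * ω) *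
        ENNReal.ofReal ((l + r ^ s) ^ (-(N - 1)) * r ^ (s * (N / 2) - 1)) := by
    intro r hr
    rw [cknKernel_mul_density _ _ _ _ hr, ENNReal.ofReal_mul (by positivity)]
  rw [setLIntegral_congr_fun measurableSet_Ioi h, lintegral_const_mul' _ _ ENNReal.ofReal_ne_top,
    lintegral_model N s l hN hs hl, ← ENNReal.ofReal_mul (by positivity)]
  unfold modelCoeff
  congr 1; ring

/-- The part of the model integral near the origin is of lower order, compared with
`l ^ (1 - N/2)`, as `l → ∞`. -/
theorem model_near (s N ω R : ℝ) (hs : 0 < s) (hN : 2 < N) (hω : 0 < ω) (hR : 0 < R) :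
    ∃ D : ℝ, 0 ≤ D ∧ ∀ l, 0 < l →
      ∫⁻ r in Set.Ioo 0 R, ENNReal.ofReal (cknKernel s (N - 1) l r)
        ∂(radialModel (s * (N / 2) + 2 - s) ω) ≤ ENNReal.ofReal (D * l ^ (-(N - 1))) := by
  have he : 0 < s * (N / 2) + 2 - s := by nlinarith
  have hsN : 0 < s * (N / 2) := by positivity
  have hinteg : IntegrableOn (fun x : ℝ => x ^ (s * (N / 2) - 1)) (Set.Ioo 0 R) :=
    (intervalIntegrable_iff_integrableOn_Ioo_of_le hR.le).1
      (intervalIntegral.intervalIntegrable_rpow' (by linarith))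
  have hnn : 0 ≤ᵐ[volume.restrict (Set.Ioo 0 R)] fun x : ℝ => x ^ (s * (N / 2) - 1) := by
    filter_upwards [ae_restrict_mem measurableSet_Ioo] with x hx
    have : (0:ℝ) < x := hx.1
    positivity
  refine ⟨(s * (N / 2) + 2 - s) * ω * ∫ x in Set.Ioo 0 R, x ^ (s * (N / 2) - 1),
    mul_nonneg (by positivity) (integral_nonneg_of_ae hnn), fun l hl => ?_⟩
  rw [setLIntegral_radialModel _ _ he hω _ _ measurableSet_Ioo (fun x hx => hx.1),
    mul_right_comm, ENNReal.ofReal_mul (by positivity), ofReal_integral_eq_lintegral_ofReal hinteg hnn,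
    ← lintegral_const_mul' _ _ ENNReal.ofReal_ne_top]
  refine setLIntegral_mono' measurableSet_Ioo fun r hr => ?_
  have hr0 : (0:ℝ) < r := hr.1
  rw [cknKernel_mul_density _ _ _ _ hr0, ← ENNReal.ofReal_mul (by positivity), mul_assoc]
  refine ENNReal.ofReal_le_ofReal ?_
  rw [mul_assoc _ (l ^ _)]
  have h1 : 0 < r ^ s := Real.rpow_pos_of_pos hr0 _
  have := Real.rpow_le_rpow_of_nonpos hl (show l ≤ l + r ^ s by linarith)
    (show -(N - 1) ≤ 0 by linarith)
  rw [mul_assoc]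
  gcongr

/-- The part of the model integral away from the origin stays bounded as `l → 0`, while the whole
integral blows up like `l ^ (1 - N/2)`. -/
theorem model_tail (s N ω R : ℝ) (hs : 0 < s) (hN : 2 < N) (hω : 0 < ω) (hR : 0 < R) :
    ∃ T : ℝ, 0 ≤ T ∧ ∀ l, 0 < l →
      ∫⁻ r in Set.Ioi R, ENNReal.ofReal (cknKernel s (N - 1) l r)
        ∂(radialModel (s * (N / 2) + 2 - s) ω) ≤ ENNReal.ofReal T := by
  have he : 0 < s * (N / 2) + 2 - s := by nlinarith
  have hsN : 0 < s * (N / 2 - 1) := mul_pos hs (by linarith)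
  have hinteg : IntegrableOn (fun x : ℝ => x ^ (-(s * (N / 2 - 1)) - 1)) (Set.Ioi R) :=
    integrableOn_Ioi_rpow_of_lt (by linarith) hR
  have hnn : 0 ≤ᵐ[volume.restrict (Set.Ioi R)] fun x : ℝ => x ^ (-(s * (N / 2 - 1)) - 1) := by
    filter_upwards [ae_restrict_mem measurableSet_Ioi] with x hx
    have : (0:ℝ) < x := hR.trans hx
    positivity
  refine ⟨(s * (N / 2) + 2 - s) * ω * ∫ x in Set.Ioi R, x ^ (-(s * (N / 2 - 1)) - 1),
    mul_nonneg (by positivity) (integral_nonneg_of_ae hnn), fun l hl => ?_⟩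
  rw [setLIntegral_radialModel _ _ he hω _ _ measurableSet_Ioi (fun x hx => hR.trans hx),
    ENNReal.ofReal_mul (by positivity), ofReal_integral_eq_lintegral_ofReal hinteg hnn,
    ← lintegral_const_mul' _ _ ENNReal.ofReal_ne_top]
  refine setLIntegral_mono' measurableSet_Ioi fun r hr => ?_
  have hr0 : (0:ℝ) < r := hR.trans hr
  rw [cknKernel_mul_density _ _ _ _ hr0, ← ENNReal.ofReal_mul (by positivity)]
  refine ENNReal.ofReal_le_ofReal ?_
  have h1 : 0 < r ^ s := Real.rpow_pos_of_pos hr0 _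
  have h2 := Real.rpow_le_rpow_of_nonpos h1 (show r ^ s ≤ l + r ^ s by linarith)
    (show -(N - 1) ≤ 0 by linarith)
  have h3 : r ^ (-(s * (N / 2 - 1)) - 1) = (r ^ s) ^ (-(N - 1)) * r ^ (s * (N / 2) - 1) := by
    rw [← Real.rpow_mul hr0.le, ← Real.rpow_add hr0]
    congr 1; ring
  rw [h3]
  gcongr

/-- The measure `m` is compared with `b` times the model plus `C₀` times the model restricted to
`(0, R)`, which dominates it on every interval `(0, r)`. -/
theorem kernel_integral_le (m : Measure ℝ) (s N ω b C₀ R l : ℝ) (hs : 0 < s) (hs2 : s ≤ 2)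
    (hN : 2 < N) (hω : 0 < ω) (hb : 0 ≤ b) (hC₀ : 0 ≤ C₀) (hl : 0 < l)
    (h1 : ∀ r, 0 < r → m (Set.Ioo 0 r) ≤ ENNReal.ofReal (C₀ * ω * r ^ (s * (N / 2) + 2 - s)))
    (h2 : ∀ r, R < r → m (Set.Ioo 0 r) ≤ ENNReal.ofReal (b * ω * r ^ (s * (N / 2) + 2 - s))) :
    ∫⁻ r in Set.Ioi 0, ENNReal.ofReal (cknKernel s (N - 1) l r) ∂m ≤
      ENNReal.ofReal b * ∫⁻ r in Set.Ioi 0, ENNReal.ofReal (cknKernel s (N - 1) l r)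
        ∂(radialModel (s * (N / 2) + 2 - s) ω)
      + ENNReal.ofReal C₀ * ∫⁻ r in Set.Ioo 0 R, ENNReal.ofReal (cknKernel s (N - 1) l r)
        ∂(radialModel (s * (N / 2) + 2 - s) ω) := by
  have he : 0 < s * (N / 2) + 2 - s := by nlinarith
  set m₀ := radialModel (s * (N / 2) + 2 - s) ω with hm₀
  have h := lintegral_antitone_compare m
    (ENNReal.ofReal b • m₀ + ENNReal.ofReal C₀ • m₀.restrict (Set.Ioo 0 R)) ?_
    (cknKernel s (N - 1) l) (cknKernel_antitoneOn _ _ _ hs hs2 (by linarith) hl)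
    (cknKernel_continuousOn _ _ _ hl) (fun x hx => cknKernel_nonneg _ _ _ _ hl hx.le)
  · simpa [Measure.restrict_restrict measurableSet_Ioi, Set.inter_eq_self_of_subset_right
      (show Set.Ioo 0 R ⊆ Set.Ioi 0 from fun x hx => hx.1)] using h
  · intro r hr
    rw [Measure.add_apply, Measure.smul_apply, Measure.smul_apply, smul_eq_mul, smul_eq_mul]
    by_cases hrR : R < r
    · refine (h2 r hrR).trans (le_add_right ?_)
      rw [radialModel_Ioo _ _ _ he hω hr, mul_assoc, ENNReal.ofReal_mul hb]
    · push Not at hrR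
      refine (h1 r hr).trans (le_add_left ?_)
      rw [Measure.restrict_apply measurableSet_Ioo, Set.inter_eq_self_of_subset_left
        (Set.Ioo_subset_Ioo_right hrR), radialModel_Ioo _ _ _ he hω hr, mul_assoc,
        ENNReal.ofReal_mul hC₀]

/-- The measure `m` is compared with `b` times the model restricted to `(0, R)`. -/
theorem le_kernel_integral (m : Measure ℝ) (s N ω b R l : ℝ) (hs : 0 < s) (hs2 : s ≤ 2)
    (hN : 2 < N) (hω : 0 < ω) (hb : 0 ≤ b) (hR : 0 < R) (hl : 0 < l)
    (h1 : ∀ r, 0 < r → r ≤ R →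
      ENNReal.ofReal (b * ω * r ^ (s * (N / 2) + 2 - s)) ≤ m (Set.Ioo 0 r)) :
    ENNReal.ofReal b * ∫⁻ r in Set.Ioo 0 R, ENNReal.ofReal (cknKernel s (N - 1) l r)
        ∂(radialModel (s * (N / 2) + 2 - s) ω)
      ≤ ∫⁻ r in Set.Ioi 0, ENNReal.ofReal (cknKernel s (N - 1) l r) ∂m := by
  have he : 0 < s * (N / 2) + 2 - s := by nlinarith
  set m₀ := radialModel (s * (N / 2) + 2 - s) ω with hm₀
  have h := lintegral_antitone_compare (ENNReal.ofReal b • m₀.restrict (Set.Ioo 0 R)) m ?_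
    (cknKernel s (N - 1) l) (cknKernel_antitoneOn _ _ _ hs hs2 (by linarith) hl)
    (cknKernel_continuousOn _ _ _ hl) (fun x hx => cknKernel_nonneg _ _ _ _ hl hx.le)
  · simpa [Measure.restrict_restrict measurableSet_Ioi, Set.inter_eq_self_of_subset_right
      (show Set.Ioo 0 R ⊆ Set.Ioi 0 from fun x hx => hx.1)] using h
  · intro r hr
    rw [Measure.smul_apply, smul_eq_mul, Measure.restrict_apply measurableSet_Ioo, Set.Ioo_inter_Ioo]
    have hmin : 0 < min r R := lt_min hr hR
    rw [max_self, radialModel_Ioo _ _ _ he hω hmin, ← ENNReal.ofReal_mul hb, ← mul_assoc]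
    exact (h1 _ hmin (min_le_right _ _)).trans
      (measure_mono (Set.Ioo_subset_Ioo_right (min_le_left _ _)))

/-! ### The volume growth argument on the half-line -/

theorem cknKernel_succ (s N l r : ℝ) (hl : 0 < l) (hr : 0 < r) :
    cknKernel s (N - 1) l r = (l + r ^ s) * cknKernel s N l r := by
  have h1 : 0 < r ^ s := Real.rpow_pos_of_pos hr _
  unfold cknKernel
  have : -(N - 1) = 1 + -N := by ring
  rw [this, Real.rpow_add (by positivity), Real.rpow_one]; ring

section OneDim

variable (m : Measure ℝ) (s N : ℝ)

theorem kernel_integrable (l : ℝ) (hl : 0 < l)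
    (hfin : ∫⁻ r in Set.Ioi 0, ENNReal.ofReal (cknKernel s (N - 1) l r) ∂m ≠ ⊤) :
    IntegrableOn (cknKernel s (N - 1) l) (Set.Ioi 0) m ∧
    IntegrableOn (cknKernel s N l) (Set.Ioi 0) m := by
  have h1 : IntegrableOn (cknKernel s (N - 1) l) (Set.Ioi 0) m := by
    refine (lintegral_ofReal_ne_top_iff_integrable
      ((cknKernel_continuousOn _ _ _ hl).aestronglyMeasurable measurableSet_Ioi) ?_).1 hfin
    filter_upwards [ae_restrict_mem measurableSet_Ioi] with r hr
    exact cknKernel_nonneg _ _ _ _ hl (le_of_lt hr)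
  refine ⟨h1, ?_⟩
  refine Integrable.mono' (h1.const_mul l⁻¹)
    ((cknKernel_continuousOn _ _ _ hl).aestronglyMeasurable measurableSet_Ioi) ?_
  filter_upwards [ae_restrict_mem measurableSet_Ioi] with r hr
  have hr0 : (0:ℝ) < r := hr
  have hk := cknKernel_nonneg s N l r hl hr0.le
  have h2 : 0 < r ^ s := Real.rpow_pos_of_pos hr0 _
  rw [Real.norm_of_nonneg hk, cknKernel_succ _ _ _ _ hl hr0, ← div_eq_inv_mul, le_div_iff₀ hl]
  nlinarith

theorem kernel_hasDerivAt (hN : 2 < N)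
    (hfin : ∀ l, 0 < l → ∫⁻ r in Set.Ioi 0, ENNReal.ofReal (cknKernel s (N - 1) l r) ∂m ≠ ⊤)
    (l : ℝ) (hl : 0 < l) :
    HasDerivAt (fun l => ∫ r in Set.Ioi 0, cknKernel s (N - 1) l r ∂m)
      (-((N - 1) * ∫ r in Set.Ioi 0, cknKernel s N l r ∂m)) l := by
  have hl2 : 0 < l / 2 := by linarith
  have h := hasDerivAt_integral_of_dominated_loc_of_deriv_le (μ := m.restrict (Set.Ioi 0))
    (F := fun l r => cknKernel s (N - 1) l r) (F' := fun l r => -((N - 1) * cknKernel s N l r))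
    (x₀ := l) (s := Set.Ioi (l / 2)) (bound := fun r => (N - 1) * cknKernel s N (l / 2) r)
    (Ioi_mem_nhds (by linarith)) ?_ (kernel_integrable m s N l hl (hfin l hl)).1 ?_ ?_ ?_ ?_
  · refine h.2.congr_deriv ?_
    rw [integral_neg, integral_const_mul]
  · filter_upwards [Ioi_mem_nhds hl] with x hx
    exact (cknKernel_continuousOn _ _ _ hx).aestronglyMeasurable measurableSet_Ioi
  · exact (((cknKernel_continuousOn _ _ _ hl).aestronglyMeasurable
      measurableSet_Ioi).const_mul _).neg
  · filter_upwards [ae_restrict_mem measurableSet_Ioi] with r hr x hx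
    have hr0 : (0:ℝ) < r := hr
    have hx' : l / 2 < x := hx
    have h2 : 0 < r ^ s := Real.rpow_pos_of_pos hr0 _
    have hk := cknKernel_nonneg s N x r (hl2.trans hx') hr0.le
    rw [norm_neg, Real.norm_of_nonneg (mul_nonneg (by linarith) hk)]
    refine mul_le_mul_of_nonneg_left ?_ (by linarith)
    unfold cknKernel
    refine mul_le_mul_of_nonneg_right ?_ (by positivity)
    exact Real.rpow_le_rpow_of_nonpos (by positivity) (by linarith) (by linarith)
  · exact (kernel_integrable m s N _ hl2 (hfin _ hl2)).2.const_mul _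
  · filter_upwards [ae_restrict_mem measurableSet_Ioi] with r hr x hx
    have hr0 : (0:ℝ) < r := hr
    have hx' : l / 2 < x := hx
    have h2 : 0 < r ^ s := Real.rpow_pos_of_pos hr0 _
    have h3 : x + r ^ s ≠ 0 := by linarith
    have h4 := (((hasDerivAt_id x).add_const (r ^ s)).rpow_const (p := -(N - 1))
      (Or.inl h3)).mul_const (r ^ (s - 2))
    refine h4.congr_deriv ?_
    unfold cknKernel
    have : -(N - 1) - 1 = -N := by ring
    rw [this]; simp only [id]; ring

/-- The one-dimensional core. The constant `t` lies strictly between the volume ratio `b` at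
infinity and the volume ratio `1` at the origin. Small parameters `l` give `J l ≥ t J₀ l` for the
model integral `J₀`, the inequality `hckn` propagates this to all `l` through `ode_compare`, and
large `l` contradicts `J l ≤ b J₀ l + o(J₀ l)`. The hypothesis `hconst` says that `t J₀` is a
barrier. -/
theorem one_dim_growth (ω C₀ b t c ρ : ℝ) (hs : 0 < s) (hs2 : s ≤ 2) (hN : 2 < N) (hω : 0 < ω)
    (hC₀ : 0 ≤ C₀) (hb : 0 ≤ b) (hbt : b < t) (ht : t < 1) (hc : 0 < c) (hρ : 0 < ρ)
    (hup : ∀ r, 0 < r → m (Set.Ioo 0 r) ≤ ENNReal.ofReal (C₀ * ω * r ^ (s * (N / 2) + 2 - s)))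
    (hlow : ∀ β, 0 ≤ β → β < 1 → ∃ R, 0 < R ∧ ∀ r, 0 < r → r ≤ R →
      ENNReal.ofReal (β * ω * r ^ (s * (N / 2) + 2 - s)) ≤ m (Set.Ioo 0 r))
    (hckn : ∀ l, 0 < l →
      (∫⁻ r in Set.Ioi 0, ENNReal.ofReal (cknKernel s N l r) ∂m) ^ ((N - 2) / N) ≤
        ENNReal.ofReal c * ∫⁻ r in Set.Ioi 0, ENNReal.ofReal (r ^ s * cknKernel s N l r) ∂m)
    (hconst : c * (t * modelCoeff s N ω - t * modelCoeff s N ω * (N / 2 - 1) / (N - 1)) ≤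
      (t * modelCoeff s N ω * (N / 2 - 1) / (N - 1)) ^ ((N - 2) / N))
    (hbig : ∀ r, ρ < r → m (Set.Ioo 0 r) ≤ ENNReal.ofReal (b * ω * r ^ (s * (N / 2) + 2 - s))) :
    False := by
  have he : 0 < s * (N / 2) + 2 - s := by nlinarith
  have hBpos : 0 < modelCoeff s N ω := by
    have h1 : 0 < Real.Gamma (N - 1) := Real.Gamma_pos_of_pos (by linarith)
    have h2 : 0 < Real.Gamma (N / 2) := Real.Gamma_pos_of_pos (by linarith)
    have h3 : 0 < Real.Gamma (N / 2 - 1) := Real.Gamma_pos_of_pos (by linarith)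
    unfold modelCoeff
    positivity
  set B := modelCoeff s N ω with hB
  obtain ⟨D, hD, hnear⟩ := model_near s N ω ρ hs hN hω hρ
  set m₀ := radialModel (s * (N / 2) + 2 - s) ω with hm₀
  have hJup : ∀ l, 0 < l → ∫⁻ r in Set.Ioi 0, ENNReal.ofReal (cknKernel s (N - 1) l r) ∂m ≤
      ENNReal.ofReal (b * (B * l ^ (1 - N / 2)) + C₀ * (D * l ^ (-(N - 1)))) := by
    intro l hl
    refine (kernel_integral_le m s N ω b C₀ ρ l hs hs2 hN hω hb hC₀ hl hup hbig).trans ?_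
    rw [model_integral s N ω l hs hN hω hl, ENNReal.ofReal_add (by positivity) (by positivity),
      ENNReal.ofReal_mul hb, ENNReal.ofReal_mul hC₀]
    gcongr
    exact hnear l hl
  have hfin : ∀ l, 0 < l → ∫⁻ r in Set.Ioi 0, ENNReal.ofReal (cknKernel s (N - 1) l r) ∂m ≠ ⊤ :=
    fun l hl => ne_top_of_le_ne_top ENNReal.ofReal_ne_top (hJup l hl)
  set J : ℝ → ℝ := fun l => ∫ r in Set.Ioi 0, cknKernel s (N - 1) l r ∂m with hJ
  set I : ℝ → ℝ := fun l => ∫ r in Set.Ioi 0, cknKernel s N l r ∂m with hI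
  have hnn : ∀ β l, 0 < l → 0 ≤ᵐ[m.restrict (Set.Ioi 0)] cknKernel s β l := by
    intro β l hl
    filter_upwards [ae_restrict_mem measurableSet_Ioi] with r hr
    exact cknKernel_nonneg _ _ _ _ hl (le_of_lt hr)
  have hJof : ∀ l, 0 < l → ENNReal.ofReal (J l)
      = ∫⁻ r in Set.Ioi 0, ENNReal.ofReal (cknKernel s (N - 1) l r) ∂m := fun l hl =>
    ofReal_integral_eq_lintegral_ofReal (kernel_integrable m s N l hl (hfin l hl)).1 (hnn _ l hl)
  have hIof : ∀ l, 0 < l → ENNReal.ofReal (I l)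
      = ∫⁻ r in Set.Ioi 0, ENNReal.ofReal (cknKernel s N l r) ∂m := fun l hl =>
    ofReal_integral_eq_lintegral_ofReal (kernel_integrable m s N l hl (hfin l hl)).2 (hnn _ l hl)
  have hJ0 : ∀ l, 0 < l → 0 ≤ J l := fun l hl => integral_nonneg_of_ae (hnn _ l hl)
  have hI0 : ∀ l, 0 < l → 0 ≤ I l := fun l hl => integral_nonneg_of_ae (hnn _ l hl)
  have hineq : ∀ l, 0 < l → (I l) ^ ((N - 2) / N) ≤ c * (J l - l * I l) := by
    intro l hl
    obtain ⟨hi1, hi2⟩ := kernel_integrable m s N l hl (hfin l hl)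
    have heq : ∀ r ∈ Set.Ioi (0:ℝ), cknKernel s (N - 1) l r - l * cknKernel s N l r
        = r ^ s * cknKernel s N l r := by
      intro r hr
      rw [cknKernel_succ _ _ _ _ hl hr]; ring
    have hdiff : J l - l * I l = ∫ r in Set.Ioi 0, r ^ s * cknKernel s N l r ∂m := by
      rw [← setIntegral_congr_fun measurableSet_Ioi heq, integral_sub hi1 (hi2.const_mul l),
        integral_const_mul]
    have hinteg : IntegrableOn (fun r => r ^ s * cknKernel s N l r) (Set.Ioi 0) m :=
      IntegrableOn.congr_fun (hi1.sub (hi2.const_mul l)) heq measurableSet_Ioi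
    have hnn2 : 0 ≤ᵐ[m.restrict (Set.Ioi 0)] fun r => r ^ s * cknKernel s N l r := by
      filter_upwards [ae_restrict_mem measurableSet_Ioi] with r hr
      have hr0 : (0:ℝ) < r := hr
      exact mul_nonneg (by positivity) (cknKernel_nonneg _ _ _ _ hl hr0.le)
    have h := hckn l hl
    have hκ : 0 ≤ (N - 2) / N := div_nonneg (by linarith) (by linarith)
    rw [← hIof l hl, ← ofReal_integral_eq_lintegral_ofReal hinteg hnn2, ← hdiff,
      ENNReal.ofReal_rpow_of_nonneg (hI0 l hl) hκ, ← ENNReal.ofReal_mul hc.le] at h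
    refine (ENNReal.ofReal_le_ofReal_iff (mul_nonneg hc.le ?_)).1 h
    rw [hdiff]
    exact integral_nonneg_of_ae hnn2
  have hN1 : 0 < N - 1 := by linarith
  have hN2 : 0 < N / 2 - 1 := by linarith
  have ht0 : 0 < t := hb.trans_lt hbt
  -- Near `l = 0` the mass close to the origin dominates and the volume ratio there is about `1 > t`.
  have hsmall : ∀ δ, 0 < δ → ∃ l, 0 < l ∧ l < δ ∧ t * B * l ^ (1 - N / 2) ≤ J l := by
    intro δ hδ
    obtain ⟨β, htβ, hβ1⟩ := exists_between ht
    have hβ0 : 0 < β := ht0.trans htβ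
    obtain ⟨R, hR, hRl⟩ := hlow β hβ0.le hβ1
    obtain ⟨T, hT, htail⟩ := model_tail s N ω (R / 2) hs hN hω (by positivity)
    have hJlow : ∀ l, 0 < l → β * (B * l ^ (1 - N / 2)) ≤ J l + β * T := by
      intro l hl
      have h1 := le_kernel_integral m s N ω β R l hs hs2 hN hω hβ0.le hR hl hRl
      have h2 : ENNReal.ofReal (B * l ^ (1 - N / 2)) ≤
          (∫⁻ r in Set.Ioo 0 R, ENNReal.ofReal (cknKernel s (N - 1) l r) ∂m₀)
            + ENNReal.ofReal T := by
        rw [← model_integral s N ω l hs hN hω hl]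
        have hsub : Set.Ioi (0:ℝ) ⊆ Set.Ioo 0 R ∪ Set.Ioi (R / 2) := by
          intro x hx
          have hx0 : (0:ℝ) < x := hx
          by_cases hxR : x < R
          · exact Or.inl ⟨hx0, hxR⟩
          · exact Or.inr (show R / 2 < x by linarith)
        refine (lintegral_mono_set hsub).trans ((lintegral_union_le _ _ _).trans ?_)
        gcongr
        exact htail l hl
      have hBl : 0 ≤ B * l ^ (1 - N / 2) := by positivity
      refine (ENNReal.ofReal_le_ofReal_iff (by have := hJ0 l hl; positivity)).1 ?_
      rw [ENNReal.ofReal_mul hβ0.le, ENNReal.ofReal_add (hJ0 l hl) (by positivity), hJof l hl,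
        ENNReal.ofReal_mul hβ0.le]
      calc _ ≤ ENNReal.ofReal β * (_ + ENNReal.ofReal T) := mul_le_mul_right h2 _
        _ ≤ _ := by rw [mul_add]; gcongr
    have hlim : Tendsto (fun l : ℝ => (β - t) * B * l ^ (1 - N / 2)) (𝓝[>] 0) atTop := by
      refine Tendsto.const_mul_atTop (mul_pos (by linarith) hBpos) ?_
      exact tendsto_rpow_neg_nhdsGT_zero (by linarith)
    obtain ⟨l, hl1, hl2⟩ := ((hlim.eventually_ge_atTop (β * T)).and
      (Ioo_mem_nhdsGT hδ)).exists
    refine ⟨l, hl2.1, hl2.2, ?_⟩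
    have := hJlow l hl2.1
    nlinarith
  have hall := ode_compare N c (t * B) (t * B * (N / 2 - 1) / (N - 1)) hN hc
    (by positivity) (by field_simp) hconst J I
    (fun l hl => kernel_hasDerivAt m s N hN hfin l hl) hineq hsmall
  -- As `l → ∞` the term coming from `(0, ρ)` is negligible, which forces `t ≤ b`.
  have hlim : Tendsto (fun l : ℝ => C₀ * D * l ^ (-(N / 2))) atTop (𝓝 (C₀ * D * 0)) :=
    (tendsto_rpow_neg_atTop (by linarith)).const_mul _
  rw [mul_zero] at hlim
  have hpos : 0 < (t - b) * B := mul_pos (by linarith) hBpos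
  obtain ⟨l, hl1, hl⟩ := ((hlim.eventually (gt_mem_nhds hpos)).and
    (eventually_gt_atTop 0)).exists
  have h1 := hall l hl
  have h2 : J l ≤ b * (B * l ^ (1 - N / 2)) + C₀ * (D * l ^ (-(N - 1))) := by
    refine (ENNReal.ofReal_le_ofReal_iff (by positivity)).1 ?_
    rw [hJof l hl]; exact hJup l hl
  have h3 : l ^ (-(N - 1)) = l ^ (-(N / 2)) * l ^ (1 - N / 2) := by
    rw [← Real.rpow_add hl]; congr 1; ring
  have h4 : 0 < l ^ (1 - N / 2) := Real.rpow_pos_of_pos hl _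
  rw [h3] at h2
  have h5 := mul_lt_mul_of_pos_right hl1 h4
  nlinarith

end OneDim

/-! ### Radial test functions -/

section Metric

variable {X : Type*} [MetricSpace X]

/-- At an isolated point the limsup is taken along `⊥` and has the value `0`. -/
theorem locLip_nonneg (u : X → ℝ) (x : X) : 0 ≤ locLip u x := by
  unfold locLip
  rw [limsup_eq]
  rcases eq_or_neBot (𝓝[≠] x) with h | h
  · simp [h]
  · refine Real.sInf_nonneg fun b hb => ?_
    obtain ⟨y, hy⟩ := (show ∀ᶠ y in 𝓝[≠] x, |u y - u x| / dist x y ≤ b from hb).exists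
    exact le_trans (by positivity) hy

theorem locLip_le (u : X → ℝ) (x : X) (b : ℝ) (hb : 0 ≤ b)
    (h : ∀ η, 0 < η → ∀ᶠ y in 𝓝 x, |u y - u x| ≤ (b + η) * dist x y) : locLip u x ≤ b := by
  unfold locLip
  rw [limsup_eq]
  rcases eq_or_neBot (𝓝[≠] x) with hbot | hbot
  · simpa [hbot] using hb
  · refine le_of_forall_pos_le_add fun η hη => ?_
    refine csInf_le ⟨0, fun c hc => ?_⟩ ?_
    · obtain ⟨y, hy⟩ := (show ∀ᶠ y in 𝓝[≠] x, |u y - u x| / dist x y ≤ c from hc).exists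
      exact le_trans (by positivity) hy
    · filter_upwards [(h η hη).filter_mono nhdsWithin_le_nhds, self_mem_nhdsWithin] with y hy hyx
      rw [div_le_iff₀ (dist_pos.2 (Ne.symm hyx))]
      exact hy

/-- The truncation of `r` to the interval `[ε, R]`, for `ε ≤ R`. -/
noncomputable def clampIcc (ε R r : ℝ) : ℝ := max ε (min R r)

theorem clampIcc_lipschitz (ε R : ℝ) : LipschitzWith 1 (clampIcc ε R) :=
  (LipschitzWith.id.const_min R).const_max ε

/-- The radial profile of the extremal functions of the sharp inequality. -/
noncomputable def cknProfile (s q l r : ℝ) : ℝ := (l + r ^ s) ^ (-q)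

theorem cknProfile_hasDerivAt (s q l r : ℝ) (hl : 0 < l) (hr : 0 < r) :
    HasDerivAt (cknProfile s q l) (-(q * s) * (r ^ (s - 1) * (l + r ^ s) ^ (-q - 1))) r := by
  have h1 : 0 < r ^ s := Real.rpow_pos_of_pos hr _
  have h2 : l + r ^ s ≠ 0 := by positivity
  have h3 := ((Real.hasDerivAt_rpow_const (x := r) (p := s) (Or.inl hr.ne')).const_add l).rpow_const
    (p := -q) (Or.inl h2)
  refine h3.congr_deriv ?_
  ring

/-- The extremal profile of the distance to `x₀`, made constant for `d ≤ ε` and zero for `d ≥ R`. The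
inner truncation is needed because `r ^ s` is not Lipschitz at `0` when `s < 1`. -/
noncomputable def cknTest (x₀ : X) (s q l ε R : ℝ) (x : X) : ℝ :=
  cknProfile s q l (clampIcc ε R (dist x₀ x)) - cknProfile s q l R

theorem cknTest_lipschitz (x₀ : X) (s q l ε R : ℝ) (hl : 0 < l) (hε : 0 < ε) (hεR : ε ≤ R) :
    ∃ K : NNReal, LipschitzWith K (cknTest x₀ s q l ε R) := by
  have hcd : ContDiffOn ℝ 1 (cknProfile s q l) (Set.Icc ε R) := by
    intro r hr
    have hr0 : 0 < r := hε.trans_le hr.1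
    have h1 : 0 < r ^ s := Real.rpow_pos_of_pos hr0 _
    have h2 : l + r ^ s ≠ 0 := by positivity
    apply ContDiffAt.contDiffWithinAt
    unfold cknProfile
    exact (contDiffAt_const.add (Real.contDiffAt_rpow_const_of_ne hr0.ne')).rpow_const_of_ne h2
  obtain ⟨K, hK⟩ := hcd.exists_lipschitzOnWith one_ne_zero (convex_Icc ε R) isCompact_Icc
  have hd : LipschitzWith 1 (fun x : X => dist x₀ x) := LipschitzWith.dist_right x₀
  have hc := (clampIcc_lipschitz ε R).comp hd
  refine ⟨K * (1 * 1), ?_⟩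
  refine LipschitzWith.of_dist_le_mul fun x y => ?_
  have hmem : ∀ r, clampIcc ε R r ∈ Set.Icc ε R := fun r =>
    ⟨le_max_left _ _, max_le hεR (min_le_left _ _)⟩
  have h1 := hK.dist_le_mul _ (hmem (dist x₀ x)) _ (hmem (dist x₀ y))
  have h2 := hc.dist_le_mul x y
  simp only [Function.comp] at h2
  unfold cknTest
  rw [dist_sub_right]
  refine h1.trans ?_
  rw [NNReal.coe_mul, mul_assoc]
  exact mul_le_mul_of_nonneg_left h2 K.2

theorem cknTest_hasCompactSupport [ProperSpace X] (x₀ : X) (s q l ε R : ℝ) (hεR : ε ≤ R) :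
    HasCompactSupport (cknTest x₀ s q l ε R) := by
  refine HasCompactSupport.intro (isCompact_closedBall x₀ R) fun x hx => ?_
  have h : R < dist x₀ x := by
    rw [mem_closedBall, dist_comm] at hx
    exact not_le.1 hx
  simp [cknTest, clampIcc, min_eq_left h.le, hεR]

theorem locLip_cknTest_le (x₀ : X) (s q l ε R : ℝ) (hl : 0 < l) (hε : 0 < ε)
    (hεR : ε ≤ R) (x : X) :
    locLip (cknTest x₀ s q l ε R) x ^ 2 ≤
      (q * s) ^ 2 * (dist x₀ x ^ s * cknKernel s (2 * q + 2) l (dist x₀ x)) := by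
  have hcont : Continuous (fun y : X => dist x₀ y) := by fun_prop
  have hker := cknKernel_nonneg s (2 * q + 2) l (dist x₀ x) hl dist_nonneg
  have hrhs : 0 ≤ (q * s) ^ 2 * (dist x₀ x ^ s * cknKernel s (2 * q + 2) l (dist x₀ x)) := by
    positivity
  -- Off the closed annulus `ε ≤ d ≤ R` the test function is locally constant.
  have hflat : (∀ᶠ y in 𝓝 x, clampIcc ε R (dist x₀ y) = clampIcc ε R (dist x₀ x)) →
      locLip (cknTest x₀ s q l ε R) x ^ 2 ≤
      (q * s) ^ 2 * (dist x₀ x ^ s * cknKernel s (2 * q + 2) l (dist x₀ x)) := by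
    intro h
    have h0 : locLip (cknTest x₀ s q l ε R) x ≤ 0 := by
      refine locLip_le _ _ _ le_rfl fun η hη => ?_
      filter_upwards [h] with y hy
      simp only [cknTest, hy, sub_self, abs_zero]
      positivity
    rw [le_antisymm h0 (locLip_nonneg _ _)]
    simpa using hrhs
  rcases lt_or_ge (dist x₀ x) ε with h1 | h1
  · apply hflat
    filter_upwards [hcont.continuousAt.eventually (gt_mem_nhds h1)] with y hy
    have : ∀ r, r < ε → clampIcc ε R r = ε := fun r hr =>
      max_eq_left ((min_le_right _ _).trans hr.le)
    rw [this _ hy, this _ h1]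
  rcases lt_or_ge R (dist x₀ x) with h2 | h2
  · apply hflat
    filter_upwards [hcont.continuousAt.eventually (lt_mem_nhds h2)] with y hy
    have : ∀ r, R < r → clampIcc ε R r = R := fun r hr => by
      rw [clampIcc, min_eq_left hr.le, max_eq_right hεR]
    rw [this _ hy, this _ h2]
  set r := dist x₀ x with hr
  have hr0 : 0 < r := hε.trans_le h1
  have hrs : 0 < r ^ s := Real.rpow_pos_of_pos hr0 _
  have hcl : clampIcc ε R r = r := by rw [clampIcc, min_eq_right h2, max_eq_right h1]
  set D := -(q * s) * (r ^ (s - 1) * (l + r ^ s) ^ (-q - 1)) with hD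
  have hder := cknProfile_hasDerivAt s q l r hl hr0
  have hle : locLip (cknTest x₀ s q l ε R) x ≤ |D| := by
    refine locLip_le _ _ _ (abs_nonneg _) fun η hη => ?_
    have ho := (hasDerivAt_iff_isLittleO.1 hder).def hη
    have htend : Tendsto (fun y : X => clampIcc ε R (dist x₀ y)) (𝓝 x) (𝓝 r) := by
      have := ((clampIcc_lipschitz ε R).continuous.comp hcont).continuousAt (x := x)
      unfold ContinuousAt at this
      simp only [Function.comp, ← hr, hcl] at this
      exact this
    filter_upwards [htend.eventually ho] with y hy
    have h3 : |clampIcc ε R (dist x₀ y) - r| ≤ dist x y := by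
      have h4 := (clampIcc_lipschitz ε R).dist_le_mul (dist x₀ y) r
      rw [hcl, Real.dist_eq, Real.dist_eq] at h4
      have h5 := abs_dist_sub_le y x x₀
      rw [dist_comm y x₀, dist_comm x x₀, dist_comm y x, ← hr] at h5
      simp only [NNReal.coe_one, one_mul] at h4
      exact h4.trans h5
    simp only [cknTest, ← hr, hcl, Real.norm_eq_abs, smul_eq_mul, sub_sub_sub_cancel_right] at hy ⊢
    set z := clampIcc ε R (dist x₀ y) with hz
    have h6 : |cknProfile s q l z - cknProfile s q l r| ≤ η * |z - r| + |z - r| * |D| := by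
      have := abs_add_le (cknProfile s q l z - cknProfile s q l r - (z - r) * D) ((z - r) * D)
      rw [sub_add_cancel, abs_mul (z - r)] at this
      linarith
    calc _ ≤ (|D| + η) * |z - r| := by linarith
      _ ≤ _ := mul_le_mul_of_nonneg_left h3 (by positivity)
  have hsq : locLip (cknTest x₀ s q l ε R) x ^ 2 ≤ |D| ^ 2 :=
    pow_le_pow_left₀ (locLip_nonneg _ _) hle 2
  refine hsq.trans (le_of_eq ?_)
  rw [sq_abs, hD]
  unfold cknKernel
  have e1 : (r ^ (s - 1)) ^ 2 = r ^ s * r ^ (s - 2) := by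
    rw [← Real.rpow_natCast, ← Real.rpow_mul hr0.le, ← Real.rpow_add hr0]
    congr 1; push_cast; ring
  have e2 : ((l + r ^ s) ^ (-q - 1)) ^ 2 = (l + r ^ s) ^ (-(2 * q + 2)) := by
    rw [← Real.rpow_natCast, ← Real.rpow_mul (by positivity)]
    congr 1; push_cast; ring
  rw [mul_pow, mul_pow, e1, e2]; ring

/-- The Caffarelli-Kohn-Nirenberg inequality for the untruncated extremal profile, by letting
`ε → 0` and `R → ∞` and using Fatou's lemma. -/
theorem ckn_radial [ProperSpace X] [MeasurableSpace X] [BorelSpace X] (μ : Measure X) (x₀ : X)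
    (a p C s q : ℝ) (hC : 0 ≤ C) (hs : 0 < s) (hq : 0 < q) (hp : 0 < p) (hpq : p * q = 2 * q + 2)
    (hap : a * p = 2 - s) (hCKN : CKNineq μ x₀ a p C) (l : ℝ) (hl : 0 < l) :
    (∫⁻ x, ENNReal.ofReal (cknKernel s (2 * q + 2) l (dist x₀ x)) ∂μ) ^ (2 / p) ≤
      ENNReal.ofReal (C ^ 2 * (q * s) ^ 2) *
        ∫⁻ x, ENNReal.ofReal (dist x₀ x ^ s * cknKernel s (2 * q + 2) l (dist x₀ x)) ∂μ := by
  set Z := ∫⁻ x, ENNReal.ofReal ((q * s) ^ 2 *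
    (dist x₀ x ^ s * cknKernel s (2 * q + 2) l (dist x₀ x))) ∂μ with hZ
  set ε : ℕ → ℝ := fun k => 1 / ((k : ℝ) + 1) with hεdef
  set R : ℕ → ℝ := fun k => (k : ℝ) + 1 with hRdef
  have hε : ∀ k, 0 < ε k := fun k => by positivity
  have hεR : ∀ k, ε k ≤ R k := fun k => by
    have h : (1:ℝ) ≤ (k : ℝ) + 1 := by have := Nat.cast_nonneg (α := ℝ) k; linarith
    exact (div_le_one (by positivity)).2 h |>.trans h
  set u : ℕ → X → ℝ := fun k => cknTest x₀ s q l (ε k) (R k) with hu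
  have hk : ∀ k, ∫⁻ x, ENNReal.ofReal (|u k x| ^ p / dist x₀ x ^ (a * p)) ∂μ ≤
      (ENNReal.ofReal C * Z ^ ((1:ℝ) / 2)) ^ p := by
    intro k
    have h := hCKN (u k) (cknTest_lipschitz x₀ s q l _ _ hl (hε k) (hεR k))
      (cknTest_hasCompactSupport x₀ s q l _ _ (hεR k))
    rw [← ENNReal.rpow_le_rpow_iff (z := 1 / p) (by positivity), ← ENNReal.rpow_mul,
      mul_one_div_cancel hp.ne', ENNReal.rpow_one]
    refine h.trans ?_
    gcongr
    exact lintegral_mono fun x => ENNReal.ofReal_le_ofReal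
      (locLip_cknTest_le x₀ s q l _ _ hl (hε k) (hεR k) x)
  have hRt : Tendsto R atTop atTop := tendsto_atTop_add_const_right _ _ tendsto_natCast_atTop_atTop
  have hεt : Tendsto ε atTop (𝓝 0) := tendsto_one_div_add_atTop_nhds_zero_nat
  have hpt : ∀ x, Tendsto (fun k => |u k x| ^ p / dist x₀ x ^ (a * p)) atTop
      (𝓝 (cknKernel s (2 * q + 2) l (dist x₀ x))) := by
    intro x
    set r := dist x₀ x with hr
    have hr0 : 0 ≤ r := dist_nonneg
    have hrs : 0 ≤ r ^ s := Real.rpow_nonneg hr0 _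
    have h1 : Tendsto (fun k => clampIcc (ε k) (R k) r) atTop (𝓝 r) := by
      have h2 : Tendsto (fun k => max (ε k) r) atTop (𝓝 (max 0 r)) := hεt.max tendsto_const_nhds
      rw [max_eq_right hr0] at h2
      refine h2.congr' ?_
      filter_upwards [hRt.eventually_ge_atTop r] with k hk
      rw [clampIcc, min_eq_right hk]
    have hc : ContinuousAt (cknProfile s q l) r := by
      unfold cknProfile
      have hne : l + r ^ s ≠ 0 := by positivity
      exact (continuousAt_const.add (Real.continuousAt_rpow_const _ _ (Or.inr hs.le))).rpow_const
        (Or.inl hne)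
    have hzero : Tendsto (fun k => cknProfile s q l (R k)) atTop (𝓝 0) := by
      have h3 : Tendsto (fun k => l + R k ^ s) atTop atTop :=
        tendsto_atTop_add_const_left _ _ ((tendsto_rpow_atTop hs).comp hRt)
      exact (tendsto_rpow_neg_atTop hq).comp h3
    have h4 : Tendsto (fun k => u k x) atTop (𝓝 (cknProfile s q l r)) := by
      have := (hc.tendsto.comp h1).sub hzero
      rwa [sub_zero] at this
    have hg0 : 0 ≤ cknProfile s q l r := by unfold cknProfile; positivity
    have h5 := ((h4.abs.rpow_const (p := p) (Or.inr hp.le)).div_const (r ^ (a * p)))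
    convert h5 using 2
    rw [abs_of_nonneg hg0]
    unfold cknKernel cknProfile
    rw [← Real.rpow_mul (by positivity), hap, div_eq_mul_inv, ← Real.rpow_neg hr0]
    congr 2
    · linarith
    · ring
  have hmeas : ∀ k, Measurable fun x => ENNReal.ofReal (|u k x| ^ p / dist x₀ x ^ (a * p)) := by
    intro k
    obtain ⟨K, hK⟩ := cknTest_lipschitz x₀ s q l _ _ hl (hε k) (hεR k)
    have h1 : Measurable (u k) := hK.continuous.measurable
    have h2 : Measurable fun x => dist x₀ x := (continuous_const.dist continuous_id).measurable
    exact ((h1.abs.pow_const p).div (h2.pow_const (a * p))).ennreal_ofReal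
  have hfatou : ∫⁻ x, ENNReal.ofReal (cknKernel s (2 * q + 2) l (dist x₀ x)) ∂μ ≤
      (ENNReal.ofReal C * Z ^ ((1:ℝ) / 2)) ^ p := by
    calc _ = ∫⁻ x, liminf (fun k => ENNReal.ofReal (|u k x| ^ p / dist x₀ x ^ (a * p))) atTop ∂μ := by
          refine lintegral_congr fun x => ?_
          exact ((ENNReal.tendsto_ofReal (hpt x)).liminf_eq).symm
      _ ≤ liminf (fun k => ∫⁻ x, ENNReal.ofReal (|u k x| ^ p / dist x₀ x ^ (a * p)) ∂μ) atTop :=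
          lintegral_liminf_le hmeas
      _ ≤ _ := by
          refine liminf_le_of_le (by isBoundedDefault) fun b hb => ?_
          obtain ⟨k, hk'⟩ := hb.exists
          exact hk'.trans (hk k)
  calc _ ≤ ((ENNReal.ofReal C * Z ^ ((1:ℝ) / 2)) ^ p) ^ (2 / p) :=
        ENNReal.rpow_le_rpow hfatou (by positivity)
    _ = ENNReal.ofReal (C ^ 2) * Z := by
        rw [← ENNReal.rpow_mul, mul_div_cancel₀ _ hp.ne', ENNReal.mul_rpow_of_nonneg _ _ (by norm_num),
          ← ENNReal.rpow_mul, ENNReal.ofReal_rpow_of_nonneg hC (by norm_num)]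
        norm_num
    _ = _ := by
        rw [hZ, ENNReal.ofReal_mul (by positivity), mul_assoc]
        simp_rw [ENNReal.ofReal_mul (sq_nonneg (q * s))]
        rw [lintegral_const_mul' _ _ ENNReal.ofReal_ne_top]

end Metric

/-! ### Constants -/

theorem omegaBall_pos (n : ℕ) : 0 < omegaBall n := by
  unfold omegaBall
  have : 0 < Real.Gamma ((n : ℝ) / 2 + 1) := Real.Gamma_pos_of_pos (by positivity)
  positivity

/-- The barrier condition: equality holds for `t = (K / C) ^ N`, and smaller `t` only helps. -/
theorem sharp_const_compare (N C K A h t : ℝ) (hN : 0 < N) (hC : 0 < C) (hK : 0 < K) (hA : 0 < A)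
    (ht : 0 < t) (htK : t ≤ (K / C) ^ N) (hKA : K ^ 2 * h = A ^ (-(2 / N))) :
    C ^ 2 * h ≤ (t * A) ^ (-(2 / N)) := by
  have h1 : ((K / C) ^ N) ^ (-(2 / N)) ≤ t ^ (-(2 / N)) :=
    Real.rpow_le_rpow_of_nonpos ht htK (by have : 0 < 2 / N := by positivity
                                           linarith)
  have h2 : ((K / C) ^ N) ^ (-(2 / N)) = C ^ 2 / K ^ 2 := by
    rw [← Real.rpow_mul (by positivity)]
    have : N * -(2 / N) = -(2:ℝ) := by field_simp
    rw [this, Real.rpow_neg (by positivity), Real.rpow_two, div_pow, inv_div]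
  rw [Real.mul_rpow ht.le hA.le, ← hKA]
  rw [h2] at h1
  have h3 : 0 ≤ K ^ 2 * h := by rw [hKA]; positivity
  calc C ^ 2 * h = C ^ 2 / K ^ 2 * (K ^ 2 * h) := by field_simp
    _ ≤ _ := mul_le_mul_of_nonneg_right h1 h3

theorem modelCoeff_eq (s N ω : ℝ) (hN : 2 < N) :
    modelCoeff s N ω * (N / 2 - 1) / (N - 1) =
      (s * (N / 2) + 2 - s) * ω * Real.Gamma (N / 2) ^ 2 / (s * Real.Gamma N) := by
  have h1 := Real.Gamma_add_one (s := N / 2 - 1) (by linarith)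
  have h2 := Real.Gamma_add_one (s := N - 1) (by linarith)
  rw [sub_add_cancel] at h1 h2
  have h3 : N - 1 ≠ 0 := by linarith
  have h4 : Real.Gamma (N - 1) ≠ 0 := (Real.Gamma_pos_of_pos (by linarith)).ne'
  unfold modelCoeff
  rw [h2]
  rw [sq]
  nth_rewrite 3 [h1]
  by_cases hs : s = 0
  · simp [hs]
  field_simp

/-! ### Density at the base point and the upper bound -/

section AR

variable {X : Type*} [MetricSpace X] [MeasurableSpace X]

theorem ARcond.eventually_lt {μ : Measure X} {x₀ : X} {n : ℕ} (h : ARcond μ x₀ n) {β : ℝ}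
    (hβ : β < 1) :
    ∀ᶠ r in 𝓝[>] (0:ℝ), β < (μ (ball x₀ r)).toReal / (omegaBall n * r ^ n) := by
  unfold ARcond at h
  refine eventually_lt_of_lt_liminf (by rw [h]; exact hβ) ⟨0, ?_⟩
  rw [eventually_map]
  filter_upwards [self_mem_nhdsWithin] with r hr
  have hr0 : (0:ℝ) < r := hr
  have := omegaBall_pos n
  show 0 ≤ _
  positivity

theorem ARcond.frequently_lt {μ : Measure X} {x₀ : X} {n : ℕ} (h : ARcond μ x₀ n) {β : ℝ}
    (hβ : 1 < β) :
    ∃ᶠ r in 𝓝[>] (0:ℝ), (μ (ball x₀ r)).toReal / (omegaBall n * r ^ n) < β := by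
  unfold ARcond at h
  refine frequently_lt_of_liminf_lt ?_ (by rw [h]; exact hβ)
  by_contra hcob
  -- If the limit inferior were infinite, its real value would be `0` instead of `1`.
  rw [liminf_eq, Real.sSup_of_not_bddAbove] at h
  · exact zero_ne_one h
  · rintro ⟨b, hb⟩
    exact hcob ⟨b, fun c hc => hb hc⟩

/-- Doubling from arbitrarily small radii at which the volume ratio is close to `1`. -/
theorem volume_upper (μ : Measure X)
    (hvol : ∀ U : Set X, IsOpen U → U.Nonempty → Bornology.IsBounded U → 0 < μ U ∧ μ U < ⊤)
    (n : ℕ) (x₀ : X) (C₀ : ℝ) (hC₀ : 1 ≤ C₀) (hVD : VDcond μ n C₀) (hAR : ARcond μ x₀ n)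
    (ρ : ℝ) (hρ : 0 < ρ) :
    μ (ball x₀ ρ) ≤ ENNReal.ofReal (C₀ * omegaBall n * ρ ^ n) := by
  have hω := omegaBall_pos n
  have hfin : ∀ r, 0 < r → μ (ball x₀ r) ≠ ⊤ := fun r hr =>
    (hvol _ isOpen_ball ⟨x₀, mem_ball_self hr⟩ isBounded_ball).2.ne
  by_contra hcon
  push Not at hcon
  have hcon' := (ENNReal.ofReal_lt_iff_lt_toReal (by positivity) (hfin ρ hρ)).1 hcon
  set v := (μ (ball x₀ ρ)).toReal with hv
  have hβ : 1 < v / (C₀ * omegaBall n * ρ ^ n) := (one_lt_div (by positivity)).2 hcon'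
  obtain ⟨r, hr1, hr⟩ := ((hAR.frequently_lt hβ).and_eventually (Ioo_mem_nhdsGT hρ)).exists
  have hr0 : 0 < r := hr.1
  have h1 := hVD x₀ r ρ hr0 hr.2
  rw [← ENNReal.ofReal_toReal (hfin r hr0), ← ENNReal.ofReal_mul (by positivity)] at h1
  have h2 := ENNReal.toReal_le_of_le_ofReal (by positivity) h1
  rw [Real.rpow_natCast, ← hv] at h2
  rw [div_lt_div_iff₀ (by positivity) (by positivity)] at hr1
  rw [div_pow] at h2
  have h3 : v * r ^ n ≤ C₀ * ρ ^ n * (μ (ball x₀ r)).toReal := by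
    calc v * r ^ n ≤ C₀ * (ρ ^ n / r ^ n) * (μ (ball x₀ r)).toReal * r ^ n := by gcongr
      _ = _ := by field_simp
  nlinarith

end AR

/-- under `(CKN)_C^{x₀}`, `(VD)^n_{C₀}` and `(AR)^n_{x₀}` on a proper metric
measure space, `(X,d,μ)` has exactly `n`-dimensional volume growth at `x₀`:
`C₀⁻¹ (K_a/C)^{n/(1-a)} ω_n ρ^n ≤ μ(B(x₀,ρ)) ≤ C₀ ω_n ρ^n` for all `ρ > 0`. -/
theorem ckn_volume_growth {X : Type*} [MetricSpace X] [ProperSpace X]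
    [MeasurableSpace X] [BorelSpace X] (μ : Measure X)
    (hvol : ∀ U : Set X, IsOpen U → U.Nonempty → Bornology.IsBounded U → 0 < μ U ∧ μ U < ⊤)
    (n : ℕ) (hn : 3 ≤ n) (a p : ℝ) (ha0 : 0 ≤ a) (ha1 : a < 1)
    (hp : p = 2 * n / (n - 2 + 2 * a))
    (x₀ : X) (C C₀ : ℝ) (hC : CKNconst n a p ≤ C) (hC₀ : 1 ≤ C₀)
    (hCKN : CKNineq μ x₀ a p C) (hVD : VDcond μ n C₀) (hAR : ARcond μ x₀ n) :
    ∀ ρ : ℝ, 0 < ρ →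
      ENNReal.ofReal (C₀⁻¹ * (CKNconst n a p / C) ^ ((n : ℝ) / (1 - a)) * omegaBall n * ρ ^ n)
          ≤ μ (ball x₀ ρ) ∧
        μ (ball x₀ ρ) ≤ ENNReal.ofReal (C₀ * omegaBall n * ρ ^ n) := by
  have hω := omegaBall_pos n
  have hup := volume_upper μ hvol n x₀ C₀ hC₀ hVD hAR
  intro ρ hρ
  refine ⟨?_, hup ρ hρ⟩
  have hn3 : (3:ℝ) ≤ n := by exact_mod_cast hn
  have hn0 : (n:ℝ) ≠ 0 := by linarith
  have h1a : 0 < 1 - a := by linarith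
  have hden : 0 < (n:ℝ) - 2 + 2 * a := by linarith
  have hp0 : 0 < p := by rw [hp]; exact div_pos (by linarith) hden
  obtain ⟨N, hNdef⟩ : ∃ N : ℝ, N = n / (1 - a) := ⟨_, rfl⟩
  obtain ⟨s, hsdef⟩ : ∃ s : ℝ, s = 2 - a * p := ⟨_, rfl⟩
  have hN : 2 < N := by
    rw [hNdef, lt_div_iff₀ h1a]; linarith
  have hs_eq : s = 2 * (n - 2) * (1 - a) / (n - 2 + 2 * a) := by
    rw [hsdef, hp]; field_simp; ring
  have hs : 0 < s := by
    rw [hs_eq]; exact div_pos (mul_pos (by linarith) h1a) hden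
  have hs2 : s ≤ 2 := by
    rw [hsdef]; have := mul_nonneg ha0 hp0.le; linarith
  have hap : a * p = 2 - s := by rw [hsdef]; ring
  have hsN : s * (N / 2) + 2 - s = n := by
    rw [hs_eq, hNdef]; field_simp; ring
  have hsN' : s * (N / 2) = n - 2 + s := by linarith
  have hpN : p * (N - 2) = 2 * N := by
    rw [hp, hNdef]; field_simp; ring
  -- the sharp constant in terms of `s` and `N`
  set K := CKNconst n a p with hKdef
  have hΓN : 0 < Real.Gamma N := Real.Gamma_pos_of_pos (by linarith)
  have hΓN2 : 0 < Real.Gamma (N / 2) := Real.Gamma_pos_of_pos (by linarith)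
  set A : ℝ := n * omegaBall n * Real.Gamma (N / 2) ^ 2 / (s * Real.Gamma N) with hA
  have hnpos : (0:ℝ) < n := by linarith
  have hn2 : (0:ℝ) < n - 2 := by linarith
  have hApos : 0 < A := by positivity
  have hN0 : 0 < N := by linarith
  have hK : K = (1 / ((n - 2) * (s * (N / 2)))) ^ ((1:ℝ) / 2) * A⁻¹ ^ (1 / N) := by
    rw [hKdef]; unfold CKNconst
    have e1 : (n:ℝ) - a * p = s * (N / 2) := by linarith
    have e2 : 2 * (n:ℝ) - 2 * a * p = s * N := by linarith
    have e3 : s * N / s = N := by field_simp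
    have e4 : s * (N / 2) / s = N / 2 := by field_simp
    have e5 : s / (s * N) = 1 / N := by field_simp
    rw [e2, e1, ← hsdef, e3, e4, e5, hA, inv_div]
  have hKpos : 0 < K := by rw [hK]; positivity
  have hCpos : 0 < C := hKpos.trans_le hC
  have hKA : K ^ 2 * ((n - 2) * (s * (N / 2))) = A ^ (-(2 / N)) := by
    rw [hK, mul_pow, ← Real.rpow_natCast, ← Real.rpow_mul (by positivity), ← Real.rpow_natCast,
      ← Real.rpow_mul (by positivity), Real.inv_rpow hApos.le, ← Real.rpow_neg hApos.le]
    have e1 : (1:ℝ) / 2 * (2 : ℕ) = 1 := by norm_num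
    have e2 : -(1 / N * (2 : ℕ)) = -(2 / N) := by push_cast; ring
    rw [e1, e2, Real.rpow_one]
    field_simp
  by_contra hcon
  push Not at hcon
  rw [← hNdef] at hcon
  set τ := (K / C) ^ N with hτ
  have hτ1 : τ ≤ 1 := Real.rpow_le_one (by positivity) ((div_le_one hCpos).2 hC) hN0.le
  have hC₀0 : 0 < C₀ := by linarith
  have hfin : ∀ r, 0 < r → μ (ball x₀ r) ≠ ⊤ := fun r hr =>
    (hvol _ isOpen_ball ⟨x₀, mem_ball_self hr⟩ isBounded_ball).2.ne
  set v := (μ (ball x₀ ρ)).toReal with hv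
  have hv0 : 0 ≤ v := ENNReal.toReal_nonneg
  have hvof : μ (ball x₀ ρ) = ENNReal.ofReal v := (ENNReal.ofReal_toReal (hfin ρ hρ)).symm
  have hvlt : v < C₀⁻¹ * τ * omegaBall n * ρ ^ n := by
    rw [hvof] at hcon
    exact (ENNReal.ofReal_lt_ofReal_iff_of_nonneg hv0).1 hcon
  -- the volume ratio at `ρ`, times `C₀`: by doubling it bounds the volume ratio at all `r > ρ`
  set b := C₀ * v / (omegaBall n * ρ ^ n) with hb
  have hb0 : 0 ≤ b := by positivity
  have hbτ : b < τ := by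
    rw [hb, div_lt_iff₀ (by positivity)]
    calc C₀ * v < C₀ * (C₀⁻¹ * τ * omegaBall n * ρ ^ n) := by gcongr
      _ = _ := by field_simp
  -- the strict gap `b < t < τ ≤ 1` absorbs both the liminf at `0` and the error at infinity
  obtain ⟨t, hbt, htτ⟩ := exists_between hbτ
  have ht0 : 0 < t := hb0.trans_lt hbt
  -- no mass at `x₀`, so the conventional value of `d ^ (-ap)` at `d = 0` is irrelevant
  have hx₀ : μ {x₀} = 0 := by
    have hlim : Tendsto (fun r : ℝ => ENNReal.ofReal (C₀ * omegaBall n * r ^ n)) (𝓝[>] 0)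
        (𝓝 (ENNReal.ofReal (C₀ * omegaBall n * 0 ^ n))) := by
      refine ENNReal.tendsto_ofReal (Tendsto.mono_left ?_ nhdsWithin_le_nhds)
      exact (Continuous.tendsto (by fun_prop) 0)
    rw [zero_pow (by omega), mul_zero, ENNReal.ofReal_zero] at hlim
    refine le_antisymm (ge_of_tendsto hlim ?_) zero_le
    filter_upwards [self_mem_nhdsWithin] with r hr
    exact (measure_mono (Set.singleton_subset_iff.2 (mem_ball_self hr))).trans (hup r hr)
  have hdm : Measurable fun x : X => dist x₀ x := (continuous_const.dist continuous_id).measurable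
  set m : Measure ℝ := μ.map fun x => dist x₀ x with hm
  have hmball : ∀ r, 0 < r → m (Set.Ioo 0 r) = μ (ball x₀ r) := by
    intro r hr
    rw [hm, Measure.map_apply hdm measurableSet_Ioo]
    have : (fun x => dist x₀ x) ⁻¹' Set.Ioo 0 r = ball x₀ r \ {x₀} := by
      ext x
      simp only [Set.mem_preimage, Set.mem_Ioo, dist_pos, Set.mem_sdiff, mem_ball,
        Set.mem_singleton_iff, dist_comm x x₀]
      tauto
    rw [this, measure_sdiff_null hx₀]
  have hmint : ∀ f : ℝ → ℝ, Measurable f →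
      ∫⁻ x, ENNReal.ofReal (f (dist x₀ x)) ∂μ = ∫⁻ r in Set.Ioi 0, ENNReal.ofReal (f r) ∂m := by
    intro f hf
    have hae : ∀ᵐ r ∂m, r ∈ Set.Ioi (0:ℝ) := by
      refine (ae_map_iff (p := fun r => r ∈ Set.Ioi (0:ℝ)) hdm.aemeasurable measurableSet_Ioi).2 ?_
      have : ∀ᵐ x ∂μ, x ≠ x₀ := by
        rw [ae_iff]; simpa using hx₀
      filter_upwards [this] with x hx
      exact dist_pos.2 hx.symm
    rw [Measure.restrict_eq_self_of_ae_mem hae, hm, lintegral_map hf.ennreal_ofReal hdm]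
  refine one_dim_growth m s N (omegaBall n) C₀ b t (C ^ 2 * ((n:ℝ) - 2) ^ 2) ρ hs hs2 hN hω hC₀0.le
    hb0 hbt (htτ.trans_le hτ1) (by positivity) hρ ?_ ?_ ?_ ?_ ?_
  · intro r hr
    rw [hmball r hr, hsN, Real.rpow_natCast]
    exact hup r hr
  · intro β hβ0 hβ1
    obtain ⟨R, hR, hRsub⟩ := mem_nhdsGT_iff_exists_Ioc_subset.1 (hAR.eventually_lt hβ1)
    refine ⟨R, hR, fun r hr hrR => ?_⟩
    rw [hmball r hr, hsN, Real.rpow_natCast]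
    have h1 : β < (μ (ball x₀ r)).toReal / (omegaBall n * r ^ n) := hRsub ⟨hr, hrR⟩
    rw [lt_div_iff₀ (by positivity), ← mul_assoc] at h1
    exact ENNReal.ofReal_le_of_le_toReal h1.le
  · intro l hl
    have hqs : (N - 2) / 2 * s = (n:ℝ) - 2 := by linarith
    have h := ckn_radial μ x₀ a p C s ((N - 2) / 2) hCpos.le hs (by linarith) hp0 (by linarith)
      hap hCKN l hl
    have e1 : 2 * ((N - 2) / 2) + 2 = N := by ring
    have e2 : 2 / p = (N - 2) / N := by
      rw [div_eq_div_iff hp0.ne' hN0.ne']; linarith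
    rw [hqs, e1, e2] at h
    have hk : Measurable (cknKernel s N l) := by unfold cknKernel; fun_prop
    have hk2 : Measurable (fun r => r ^ s * cknKernel s N l r) := by fun_prop
    rw [hmint _ hk, hmint _ hk2] at h
    exact h
  · have hB := modelCoeff_eq s N (omegaBall n) hN
    rw [hsN, ← hA] at hB
    set B := modelCoeff s N (omegaBall n) with hBdef
    have hN2 : N - 2 ≠ 0 := by linarith
    have hN1 : N - 1 ≠ 0 := by linarith
    have hBA : B - A = A * (N / (N - 2)) := by
      have h1 : B * (N / 2 - 1) = A * (N - 1) := by
        rw [← hB]; field_simp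
      field_simp
      linarith
    have e1 : t * B * (N / 2 - 1) / (N - 1) = t * A := by rw [← hB]; ring
    have e2 : (t * A) ^ ((N - 2) / N) = t * A * (t * A) ^ (-(2 / N)) := by
      have : (N - 2) / N = 1 + -(2 / N) := by field_simp; ring
      rw [this, Real.rpow_add (by positivity), Real.rpow_one]
    have h2 := sharp_const_compare N C K A _ t hN0 hCpos hKpos hApos ht0 htτ.le hKA
    have e3 : s * (N / 2) = ((n:ℝ) - 2) * (N / (N - 2)) := by
      have : (n:ℝ) - 2 = s * (N - 2) / 2 := by linarith
      rw [this]; field_simp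
    rw [e1, e2]
    calc C ^ 2 * ((n:ℝ) - 2) ^ 2 * (t * B - t * A)
        = t * A * (C ^ 2 * ((n - 2) * (s * (N / 2)))) := by
          rw [← mul_sub, hBA, e3]; ring
      _ ≤ _ := by gcongr
  · intro r hr
    have hr0 : 0 < r := hρ.trans hr
    rw [hmball r hr0, hsN, Real.rpow_natCast]
    refine (hVD x₀ ρ r hρ hr).trans ?_
    rw [hvof, ← ENNReal.ofReal_mul (by positivity), Real.rpow_natCast]
    refine ENNReal.ofReal_le_ofReal (le_of_eq ?_)
    rw [hb, div_pow]
    field_simp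
end

section
/- For every λ > 0 the following Euclidean integral identity holds: (∫_{ℝ^n} (λ+|x|^{2-ap})^{(2-n)p/(2-ap)}·|x|^{-ap} dx)^{2/p} = K_a²·(n-2)²·∫_{ℝ^n} (λ+|x|^{2-ap})^{2(ap-n)/(2-ap)}·|x|^{2-2ap} dx. (This expresses that the functions u_λ(x) = (λ+|x|^{2-ap})^{(2-n)/(2-ap)} are extremals of the sharp Euclidean Caffarelli-Kohn-Nirenberg inequality.) -/
/-!
Both integrands are radial. Put `b = 2 - ap` and `s = (n - ap) / b = n / (2 (1 - a)) > 1`. Polar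
coordinates and the substitution `t = r ^ b` turn the two integrals into Euler integrals
`∫₀^∞ t ^ (u - 1) (λ + t) ^ (-(u + v)) dt = λ ^ (-v) B(u, v)`, with `(u, v) = (s, s)` on the left
and `(u, v) = (s + 1, s - 1)` on the right (`integral_radial`). Since
`B(s + 1, s - 1) = s / (s - 1) * B(s, s)`, with `A = n ω_n B(s, s) / b` the two integrals are
`A λ ^ (-s)` and `s / (s - 1) * A λ ^ (1 - s)`. Finally `2 / p = 1 - 1 / s`,
`K_a ^ 2 = A ^ (-1 / s) / ((n - 2) (n - ap))` and `s / (s - 1) = (n - ap) / (n - 2)`, so both sides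
equal `A ^ (1 - 1 / s) λ ^ (1 - s)`.
-/

open MeasureTheory Filter Topology Metric

open ProbabilityTheory in
lemma integral_Ioo_eq_beta {u v : ℝ} (hu : 0 < u) (hv : 0 < v) :
    ∫ x in Set.Ioo (0 : ℝ) 1, x ^ (u - 1) * (1 - x) ^ (v - 1) = beta u v := by
  rw [beta_eq_betaIntegralReal u v hu hv, Complex.betaIntegral,
    intervalIntegral.integral_of_le zero_le_one, ← integral_Ioc_eq_integral_Ioo]
  have h : ∀ x ∈ Set.Ioc (0 : ℝ) 1,
      (x : ℂ) ^ ((u : ℂ) - 1) * (1 - (x : ℂ)) ^ ((v : ℂ) - 1)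
        = ((x ^ (u - 1) * (1 - x) ^ (v - 1) : ℝ) : ℂ) := by
    intro x hx
    have h1 : (0 : ℝ) ≤ 1 - x := by linarith [hx.2]
    rw [Complex.ofReal_mul, Complex.ofReal_cpow hx.1.le, Complex.ofReal_cpow h1]
    push_cast
    rfl
  rw [setIntegral_congr_fun measurableSet_Ioc h, integral_complex_ofReal, Complex.ofReal_re]

open ProbabilityTheory in
/-- Euler's integral on the half-line, from the one on `(0, 1)` by `x = t / (lam + t)`. -/
lemma integral_Ioi_eq_beta {u v lam : ℝ} (hu : 0 < u) (hv : 0 < v) (hlam : 0 < lam) :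
    ∫ t in Set.Ioi (0 : ℝ), t ^ (u - 1) * (lam + t) ^ (-(u + v)) = lam ^ (-v) * beta u v := by
  have himg : (fun t : ℝ => t / (lam + t)) '' Set.Ioi 0 = Set.Ioo 0 1 := by
    ext x
    simp only [Set.mem_image, Set.mem_Ioi, Set.mem_Ioo]
    constructor
    · rintro ⟨t, ht, rfl⟩
      exact ⟨by positivity, by rw [div_lt_one (by positivity)]; linarith⟩
    · rintro ⟨h0, h1⟩
      have h2 : 0 < 1 - x := by linarith
      refine ⟨lam * x / (1 - x), by positivity, ?_⟩
      field_simp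
      ring
  have hder : ∀ t ∈ Set.Ioi (0 : ℝ),
      HasDerivWithinAt (fun t : ℝ => t / (lam + t)) (lam / (lam + t) ^ 2) (Set.Ioi 0) t := by
    intro t ht
    have ht' : 0 < t := ht
    have h := (hasDerivAt_id' t).div ((hasDerivAt_id' t).const_add lam)
      (by positivity)
    refine h.hasDerivWithinAt.congr_deriv ?_
    ring
  have hinj : Set.InjOn (fun t : ℝ => t / (lam + t)) (Set.Ioi 0) := by
    intro x hx y hy hxy
    have hx' : 0 < x := hx
    have hy' : 0 < y := hy
    have h1 : lam + x ≠ 0 := by positivity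
    have h2 : lam + y ≠ 0 := by positivity
    simp only [div_eq_div_iff h1 h2] at hxy
    have : lam * x = lam * y := by linarith
    exact mul_left_cancel₀ hlam.ne' this
  have key := integral_image_eq_integral_abs_deriv_smul measurableSet_Ioi hder hinj
    (fun x => x ^ (u - 1) * (1 - x) ^ (v - 1))
  rw [himg, integral_Ioo_eq_beta hu hv] at key
  rw [key, ← integral_const_mul]
  refine setIntegral_congr_fun measurableSet_Ioi fun t ht => ?_
  have ht' : 0 < t := ht
  have hs : 0 < lam + t := by positivity
  have h1 : 1 - t / (lam + t) = lam / (lam + t) := by field_simp; ring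
  have h2 : (lam + t) ^ (-(u + v))
      = ((lam + t) ^ (u - 1))⁻¹ * ((lam + t) ^ (v - 1))⁻¹ * ((lam + t) ^ 2)⁻¹ := by
    rw [← Real.rpow_neg hs.le, ← Real.rpow_neg hs.le, ← Real.rpow_natCast,
      ← Real.rpow_neg hs.le, ← Real.rpow_add hs, ← Real.rpow_add hs]
    congr 1
    push_cast
    ring
  have h3 : lam ^ (-v) * (lam * lam ^ (v - 1)) = 1 := by
    nth_rewrite 2 [← Real.rpow_one lam]
    rw [← Real.rpow_add hlam, ← Real.rpow_add hlam]
    simp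
  simp only [smul_eq_mul]
  rw [h1, abs_of_pos (by positivity), Real.div_rpow ht'.le hs.le, Real.div_rpow hlam.le hs.le, h2]
  calc _ = (lam ^ (-v) * (lam * lam ^ (v - 1))) * (t ^ (u - 1) *
        (((lam + t) ^ (u - 1))⁻¹ * ((lam + t) ^ (v - 1))⁻¹ * ((lam + t) ^ 2)⁻¹)) := by
        rw [h3, one_mul]
    _ = _ := by ring

lemma volume_real_unitBall {n : ℕ} (hn : 3 ≤ n) :
    (volume : Measure (EuclideanSpace ℝ (Fin n))).real (ball 0 1) = omegaBall n := by
  have : Nonempty (Fin n) := ⟨⟨0, by omega⟩⟩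
  rw [Measure.real, EuclideanSpace.volume_ball, omegaBall]
  have hG : 0 < Real.Gamma ((n : ℝ) / 2 + 1) := Real.Gamma_pos_of_pos (by positivity)
  simp only [ENNReal.ofReal_one, one_pow, one_mul, Fintype.card_fin]
  rw [ENNReal.toReal_ofReal (by positivity), Real.sqrt_eq_rpow, ← Real.rpow_natCast,
    ← Real.rpow_mul Real.pi_pos.le]
  congr 2
  ring

/-- The radial integrals of the identity; the hypothesis `he` says that, in polar coordinates,
`r ^ e * r ^ (n - 1) dr` becomes `t ^ (u - 1) dt / b` under `t = r ^ b`. -/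
lemma integral_radial {n : ℕ} (hn : 3 ≤ n) {b lam u v e : ℝ} (hb : 0 < b) (hlam : 0 < lam)
    (hu : 0 < u) (hv : 0 < v) (he : e + n = b * u) :
    ∫ x : EuclideanSpace ℝ (Fin n), (lam + ‖x‖ ^ b) ^ (-(u + v)) * ‖x‖ ^ e
      = n * omegaBall n / b * (lam ^ (-v) * ProbabilityTheory.beta u v) := by
  have : Nonempty (Fin n) := ⟨⟨0, by omega⟩⟩
  rw [integral_fun_norm_addHaar volume (fun r : ℝ => (lam + r ^ b) ^ (-(u + v)) * r ^ e),
    volume_real_unitBall hn, ← integral_Ioi_eq_beta hu hv hlam,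
    ← integral_comp_rpow_Ioi_of_pos (g := fun t => t ^ (u - 1) * (lam + t) ^ (-(u + v))) hb,
    finrank_euclideanSpace, Fintype.card_fin, nsmul_eq_mul, smul_eq_mul,
    ← integral_const_mul, ← integral_const_mul, ← integral_const_mul]
  refine setIntegral_congr_fun measurableSet_Ioi fun r hr => ?_
  have hr' : 0 < r := hr
  have h1 : r ^ (n - 1) * r ^ e = r ^ (b - 1) * (r ^ b) ^ (u - 1) := by
    rw [← Real.rpow_natCast, ← Real.rpow_add hr', ← Real.rpow_mul hr'.le, ← Real.rpow_add hr']
    congr 1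
    rw [Nat.cast_sub (by omega)]
    push_cast
    linarith
  simp only [smul_eq_mul]
  calc _ = n * omegaBall n * (lam + r ^ b) ^ (-(u + v)) * (r ^ (n - 1) * r ^ e) := by ring
    _ = _ := by rw [h1]; field_simp

lemma beta_add_one_sub_one {s : ℝ} (hs : 1 < s) :
    ProbabilityTheory.beta (s + 1) (s - 1) = s / (s - 1) * ProbabilityTheory.beta s s := by
  have h0 : s - 1 ≠ 0 := by linarith
  have h1 : Real.Gamma s = (s - 1) * Real.Gamma (s - 1) := by
    have := Real.Gamma_add_one h0
    rwa [sub_add_cancel] at this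
  have h2 : Real.Gamma (s + 1) = s * Real.Gamma s := Real.Gamma_add_one (by linarith)
  have h3 : s + 1 + (s - 1) = s + s := by ring
  unfold ProbabilityTheory.beta
  rw [h3, h2]
  nth_rewrite 3 [h1]
  field_simp

/-- the Euclidean integral identity expressing that
`u_λ(x) = (λ+|x|^{2-ap})^{(2-n)/(2-ap)}` are extremals of the sharp Euclidean
Caffarelli-Kohn-Nirenberg inequality. -/
theorem euclidean_extremal_identity (n : ℕ) (hn : 3 ≤ n) (a p : ℝ) (ha0 : 0 ≤ a) (ha1 : a < 1)
    (hp : p = 2 * n / (n - 2 + 2 * a)) (lam : ℝ) (hlam : 0 < lam) :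
    (∫ x : EuclideanSpace ℝ (Fin n),
        (lam + ‖x‖ ^ (2 - a * p)) ^ ((2 - (n : ℝ)) * p / (2 - a * p)) * ‖x‖ ^ (-(a * p))) ^ (2 / p)
      = CKNconst n a p ^ 2 * ((n : ℝ) - 2) ^ 2 *
        ∫ x : EuclideanSpace ℝ (Fin n),
          (lam + ‖x‖ ^ (2 - a * p)) ^ (2 * (a * p - (n : ℝ)) / (2 - a * p)) *
            ‖x‖ ^ (2 - 2 * a * p) := by
  have hn3 : (3 : ℝ) ≤ n := by exact_mod_cast hn
  have hn2 : 0 < (n : ℝ) - 2 := by linarith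
  have hn0 : 0 < (n : ℝ) := by linarith
  have ha : 0 < 1 - a := by linarith
  have hD : 0 < (n : ℝ) - 2 + 2 * a := by linarith
  obtain ⟨s, hs⟩ : ∃ s, s = (n : ℝ) / (2 * (1 - a)) := ⟨_, rfl⟩
  obtain ⟨b, hbd⟩ : ∃ b, b = 2 - a * p := ⟨_, rfl⟩
  have hb : b = 2 * (n - 2) * (1 - a) / (n - 2 + 2 * a) := by
    rw [hbd, hp]; field_simp; ring
  have hbpos : 0 < b := by rw [hb]; positivity
  have hs1 : 1 < s := by rw [hs, one_lt_div (by positivity)]; linarith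
  have hnap : (n : ℝ) - a * p = b * s := by
    rw [hb, hs, hp]; field_simp; ring
  have hbs1 : (n : ℝ) - 2 = b * (s - 1) := by linarith
  have hpb : (n - 2) * p = 2 * s * b := by
    rw [hb, hs, hp]; field_simp
  have h2p : 2 / p = 1 - 1 / s := by
    rw [hp, hs]; field_simp; ring
  have hs0 : 0 < s := by linarith
  have hsm : 0 < s - 1 := by linarith
  have e1 : (2 - (n : ℝ)) * p / (2 - a * p) = -(s + s) := by
    rw [← hbd, div_eq_iff hbpos.ne']; linarith
  have e2 : 2 * (a * p - (n : ℝ)) / (2 - a * p) = -((s + 1) + (s - 1)) := by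
    rw [← hbd, div_eq_iff hbpos.ne']; linarith
  rw [e1, e2, ← hbd, integral_radial hn hbpos hlam hs0 hs0 (by linarith),
    integral_radial hn hbpos hlam (by linarith : 0 < s + 1) hsm (by linarith),
    beta_add_one_sub_one hs1, h2p]
  have hω : 0 < omegaBall n := by
    have hG : 0 < Real.Gamma ((n : ℝ) / 2 + 1) := Real.Gamma_pos_of_pos (by positivity)
    unfold omegaBall
    positivity
  have hβ := ProbabilityTheory.beta_pos hs0 hs0
  obtain ⟨A, hA⟩ : ∃ A, A = n * omegaBall n / b * ProbabilityTheory.beta s s := ⟨_, rfl⟩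
  have hApos : 0 < A := by rw [hA]; positivity
  have hK : CKNconst n a p ^ 2 = 1 / ((n - 2) * (b * s)) * A ^ (-(1 / s)) := by
    have f1 : (2 * (n : ℝ) - 2 * a * p) / (2 - a * p) = s + s := by
      rw [← hbd, div_eq_iff hbpos.ne']; linarith
    have f2 : ((n : ℝ) - a * p) / (2 - a * p) = s := by
      rw [← hbd, div_eq_iff hbpos.ne']; linarith
    have f3 : (2 - a * p) / (2 * (n : ℝ) - 2 * a * p) = 1 / s / 2 := by
      have : 2 * (n : ℝ) - 2 * a * p = 2 * (b * s) := by linarith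
      rw [this, ← hbd]; field_simp
    have hG1 : 0 < Real.Gamma s := Real.Gamma_pos_of_pos hs0
    have hG2 : 0 < Real.Gamma (s + s) := Real.Gamma_pos_of_pos (by linarith)
    have f4 : b * Real.Gamma (s + s) / (n * omegaBall n * Real.Gamma s ^ 2) = A⁻¹ := by
      rw [hA, ProbabilityTheory.beta]; field_simp
    unfold CKNconst
    rw [f1, f2, f3, ← hbd, f4, hnap, mul_pow, ← Real.rpow_natCast, ← Real.rpow_natCast,
      ← Real.rpow_mul (by positivity), ← Real.rpow_mul (by positivity), Real.inv_rpow hApos.le,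
      Real.rpow_neg hApos.le]
    norm_num
  have hI1 : (n * omegaBall n / b * (lam ^ (-s) * ProbabilityTheory.beta s s))
      = A * lam ^ (-s) := by
    rw [hA]; ring
  have hI2 : (n * omegaBall n / b *
      (lam ^ (-(s - 1)) * (s / (s - 1) * ProbabilityTheory.beta s s)))
        = s / (s - 1) * (A * lam ^ (-(s - 1))) := by
    rw [hA]; ring
  rw [hI1, hI2, hK, Real.mul_rpow hApos.le (by positivity), ← Real.rpow_mul hlam.le]
  have g1 : -s * (1 - 1 / s) = -(s - 1) := by field_simp
  have g2 : A ^ (1 - 1 / s) = A * A ^ (-(1 / s)) := by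
    rw [sub_eq_add_neg, Real.rpow_add hApos, Real.rpow_one]
  rw [g1, g2, hbs1]
  field_simp
end
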